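/- Let b>0, d∈ℕ and let (G_n)_{n≥0} be a (b,d)-expander. There is a constant C(b,d)<∞, depending only on b and d, such that for every n and every p∈(0,1): Var_p(L_n^{(1)}) ≤ C(b,d) · (|V_n|/log|V_n|) · (d/dp) E_p(L_n^{(1)}), where (d/dp) E_p(L_n^{(1)}) is the derivative at p of the map q ↦ E_{n,q}(L_n^{(1)}). -/

import Mathlib

open Filter

noncomputable section

/-- The spanning subgraph of `G` determined by the configuration `x : {0,1}^E`:
an edge of `G` is retained iff its coordinate equals `true`. -/
def percoGraph {V : Type*} (G : SimpleGraph V) (x : G.edgeSet → Bool) : SimpleGraph V :=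
  SimpleGraph.fromEdgeSet {e : Sym2 V | ∃ h : e ∈ G.edgeSet, x ⟨e, h⟩ = true}

/-- The vertex set of the connected component of `v` in the configuration `x`. -/
def percoComp {V : Type*} (G : SimpleGraph V) (x : G.edgeSet → Bool) (v : V) : Set V :=
  {u | (percoGraph G x).Reachable v u}

/-- The number of vertices of the connected component of `v` in the configuration `x`. -/
def compSize {V : Type*} (G : SimpleGraph V) (x : G.edgeSet → Bool) (v : V) : ℕ :=
  (percoComp G x v).ncard

/-- `L⁽¹⁾`: the number of vertices of the largest connected component of the configuration. -/
def largestComp {V : Type*} (G : SimpleGraph V) (x : G.edgeSet → Bool) : ℕ :=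
  sSup (Set.range (compSize G x))

/-- The probability of a single configuration under the product Bernoulli(p) measure. -/
def configProb {E : Type*} (p : ℝ) (x : E → Bool) : ℝ :=
  ∏ᶠ e : E, if x e then p else 1 - p

/-- The product Bernoulli(p) probability of a set of configurations. -/
def probC {E : Type*} (p : ℝ) (A : Set (E → Bool)) : ℝ :=
  ∑ᶠ x ∈ A, configProb p x

/-- Expectation under the product Bernoulli(p) measure. -/
def expC {E : Type*} (p : ℝ) (f : (E → Bool) → ℝ) : ℝ :=
  ∑ᶠ x : E → Bool, configProb p x * f x

/-- Variance under the product Bernoulli(p) measure. -/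
def varC {E : Type*} (p : ℝ) (f : (E → Bool) → ℝ) : ℝ :=
  expC p (fun x => f x ^ 2) - (expC p f) ^ 2

open Classical in
/-- The configuration `x` with coordinate `e` set to `b`. -/
def setEdge {E : Type*} (x : E → Bool) (e : E) (b : Bool) : E → Bool :=
  fun e' => if e' = e then b else x e'

/-- The operator `Δ_{e,p} f (x) = f(x) - ∫ f(x) dx(e)`. -/
def deltaE {E : Type*} (p : ℝ) (f : (E → Bool) → ℝ) (e : E) (x : E → Bool) : ℝ :=
  f x - (p * f (setEdge x e true) + (1 - p) * f (setEdge x e false))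

/-- The norm `‖g‖_{1,p}`. -/
def norm1 {E : Type*} (p : ℝ) (g : (E → Bool) → ℝ) : ℝ :=
  expC p fun x => |g x|

/-- The squared norm `‖g‖_{2,p}²`. -/
def sqNorm2 {E : Type*} (p : ℝ) (g : (E → Bool) → ℝ) : ℝ :=
  expC p fun x => g x ^ 2

/-- `|E(S, Sᶜ)|`: the number of edges of `G` with one endpoint in `S` and the other outside `S`
(counted via the ordered pair whose first coordinate lies in `S`). -/
def edgeBoundaryCard {V : Type*} (G : SimpleGraph V) (S : Set V) : ℕ :=
  {q : V × V | G.Adj q.1 q.2 ∧ q.1 ∈ S ∧ q.2 ∉ S}.ncard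

/-- The maximal degree of `G` is at most `d`. -/
def DegreeLE {V : Type*} (G : SimpleGraph V) (d : ℕ) : Prop :=
  ∀ v, {u | G.Adj v u}.ncard ≤ d

/-- The Cheeger (edge-isoperimetric) constant of `G` is strictly greater than `b`. -/
def CheegerGT {V : Type*} (G : SimpleGraph V) (b : ℝ) : Prop :=
  ∀ S : Set V, 0 < S.ncard → 2 * S.ncard ≤ Nat.card V →
    b * (S.ncard : ℝ) < (edgeBoundaryCard G S : ℝ)

/-- A `(b,d)`-expander: a sequence of finite graphs with `|V_n| → ∞`, maximal degree at most `d`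
and Cheeger constant greater than `b`. -/
structure ExpanderSeq (b : ℝ) (d : ℕ) where
  V : ℕ → Type
  finV : ∀ n, Finite (V n)
  G : ∀ n, SimpleGraph (V n)
  card_tendsto : Tendsto (fun n => Nat.card (V n)) atTop atTop
  degree_le : ∀ n, DegreeLE (G n) d
  cheeger_gt : ∀ n, CheegerGT (G n) b

/-
For a monotone `f`, the Efron–Stein inequality and Russo's formula bound the variance by `k` times
the derivative of the expectation, up to an error coming from the closed edges whose opening
increases `f` by at least `k`. When `f` is the size of the largest cluster, such an edge joins two
distinct clusters with at least `k` vertices.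

The number of these edges is controlled as in the uniqueness argument of Aizenman, Kesten and
Newman: exploring the clusters of two vertices reveals a stopping set of edges, so its number of
open edges is close to `p` times its size except on a very unlikely event. Comparing the joint
exploration of two distinct clusters with the separate ones bounds the number of edges joining them.

The probability that such edges exist is bounded by the derivative through expansion. Balls grow by
a factor `τ = 1 + b / d` per step up to half of the graph, and their complements then shrink by the
same factor, so for `k = |V| / τ ^ r` the ball of radius `2 * r` around one of the two clusters
contains at least `k / 2` vertices of the other. Opening the edges of a path between the clusters
makes the largest cluster grow by at least `k`, at the price of a factor exponential in `r`. With
`r` a small multiple of `log |V|` this price is a small power of `|V|`, and `k` is at most of order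
`|V| / log |V|`.

Two ranges of `p` are treated separately: for small `p` the exploration rules out large clusters,
and for `p` close to `1` cutting off a cluster requires at least `b * k` closed edges.
-/

section SetEdge

variable {E : Type*}

theorem setEdge_eq_update [DecidableEq E] (x : E → Bool) (e : E) (b : Bool) :
    setEdge x e b = Function.update x e b := by
  funext a
  by_cases h : a = e <;> simp [setEdge, h]

@[simp]
theorem setEdge_apply_self (x : E → Bool) (e : E) (b : Bool) : setEdge x e b e = b := by
  simp only [setEdge, if_true]

theorem setEdge_apply_of_ne {a e : E} (h : a ≠ e) (x : E → Bool) (b : Bool) :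
    setEdge x e b a = x a := by
  simp only [setEdge, h, if_false]

@[simp]
theorem setEdge_setEdge (x : E → Bool) (e : E) (b c : Bool) :
    setEdge (setEdge x e b) e c = setEdge x e c := by
  classical simp only [setEdge_eq_update, Function.update_idem]

theorem setEdge_comm {e a : E} (h : e ≠ a) (x : E → Bool) (b c : Bool) :
    setEdge (setEdge x e b) a c = setEdge (setEdge x a c) e b := by
  classical simp only [setEdge_eq_update, Function.update_comm h]

@[simp]
theorem setEdge_eq_self (x : E → Bool) (e : E) : setEdge x e (x e) = x := by
  classical simp only [setEdge_eq_update, Function.update_eq_self]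

theorem setEdge_false_le (x : E → Bool) (e : E) : setEdge x e false ≤ x := by
  intro a
  by_cases h : a = e
  · simp [h]
  · rw [setEdge_apply_of_ne h]

theorem le_setEdge_true (x : E → Bool) (e : E) : x ≤ setEdge x e true := by
  intro a
  by_cases h : a = e
  · subst h
    simpa only [setEdge_apply_self] using Bool.le_true _
  · rw [setEdge_apply_of_ne h]

theorem two_mul_sum_eq_sum_setEdge [Fintype (E → Bool)] (e : E) (F : (E → Bool) → ℝ) :
    2 * ∑ x, F x = ∑ x, (F (setEdge x e true) + F (setEdge x e false)) := by
  have flip : Function.Involutive fun x : E → Bool => setEdge x e (!x e) := fun x => by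
    simp only [setEdge_apply_self, setEdge_setEdge, Bool.not_not, setEdge_eq_self]
  rw [two_mul]
  nth_rewrite 2 [← Equiv.sum_comp flip.toPerm F]
  rw [← Finset.sum_add_distrib]
  refine Finset.sum_congr rfl fun x _ => ?_
  have self := setEdge_eq_self x e
  cases hx : x e <;> rw [hx] at self <;> simp [self, hx, add_comm]

end SetEdge

section Expectation

variable {E : Type*}

theorem configProb_eq_prod [Fintype E] (p : ℝ) (x : E → Bool) :
    configProb p x = ∏ e, if x e then p else 1 - p :=
  finprod_eq_prod_of_fintype _

theorem configProb_nonneg {p : ℝ} (hp : p ∈ Set.Icc (0 : ℝ) 1) (x : E → Bool) :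
    0 ≤ configProb p x :=
  finprod_nonneg fun e => by split_ifs <;> linarith [hp.1, hp.2]

theorem expC_eq_sum [Fintype (E → Bool)] (p : ℝ) (f : (E → Bool) → ℝ) :
    expC p f = ∑ x, configProb p x * f x :=
  finsum_eq_sum_of_fintype _

theorem probC_eq_expC_indicator (p : ℝ) (A : Set (E → Bool)) :
    probC p A = expC p (A.indicator 1) := by
  rw [probC, finsum_mem_def]
  exact finsum_congr fun x => by by_cases hx : x ∈ A <;> simp [hx]

theorem expC_prod [Fintype E] (p : ℝ) (g : E → Bool → ℝ) :
    expC p (fun x => ∏ e, g e (x e)) = ∏ e, (p * g e true + (1 - p) * g e false) := by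
  classical
  have expand := Fintype.prod_sum fun (e : E) (b : Bool) => (if b then p else 1 - p) * g e b
  simp only [Fintype.sum_bool, if_true, Bool.false_eq_true, if_false] at expand
  simp only [expC_eq_sum, configProb_eq_prod, ← Finset.prod_mul_distrib, expand]

variable [Finite E]

theorem expC_const (p c : ℝ) : expC p (fun _ : E → Bool => c) = c := by
  cases nonempty_fintype E
  cases nonempty_fintype (E → Bool)
  have total := expC_prod p fun (_ : E) _ => (1 : ℝ)
  simp only [Finset.prod_const_one, mul_one, add_sub_cancel, expC_eq_sum] at total
  rw [expC_eq_sum, ← Finset.sum_mul, total, one_mul]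

theorem expC_add (p : ℝ) (f g : (E → Bool) → ℝ) :
    expC p (fun x => f x + g x) = expC p f + expC p g := by
  cases nonempty_fintype (E → Bool)
  simp only [expC_eq_sum, mul_add, Finset.sum_add_distrib]

theorem expC_const_mul (p c : ℝ) (f : (E → Bool) → ℝ) :
    expC p (fun x => c * f x) = c * expC p f := by
  cases nonempty_fintype (E → Bool)
  simp only [expC_eq_sum, Finset.mul_sum, mul_left_comm]

theorem expC_sum {ι : Type*} (p : ℝ) (s : Finset ι) (f : ι → (E → Bool) → ℝ) :
    expC p (fun x => ∑ i ∈ s, f i x) = ∑ i ∈ s, expC p (f i) := by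
  cases nonempty_fintype (E → Bool)
  simp only [expC_eq_sum, Finset.mul_sum]
  exact Finset.sum_comm

variable {p : ℝ}

theorem expC_mono (hp : p ∈ Set.Icc (0 : ℝ) 1) {f g : (E → Bool) → ℝ} (h : f ≤ g) :
    expC p f ≤ expC p g := by
  cases nonempty_fintype (E → Bool)
  simp only [expC_eq_sum]
  exact Finset.sum_le_sum fun x _ => mul_le_mul_of_nonneg_left (h x) (configProb_nonneg hp x)

theorem expC_nonneg (hp : p ∈ Set.Icc (0 : ℝ) 1) {f : (E → Bool) → ℝ} (h : 0 ≤ f) :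
    0 ≤ expC p f := by
  simpa only [expC_const] using expC_mono (f := fun _ => 0) hp h

theorem probC_mul_le_expC (hp : p ∈ Set.Icc (0 : ℝ) 1) {A : Set (E → Bool)}
    {f : (E → Bool) → ℝ} (hf : 0 ≤ f) {c : ℝ} (h : ∀ x ∈ A, c ≤ f x) :
    probC p A * c ≤ expC p f := by
  rw [probC_eq_expC_indicator, mul_comm, ← expC_const_mul]
  refine expC_mono hp fun x => ?_
  by_cases hx : x ∈ A
  · simpa [hx] using h x hx
  · simpa [hx] using hf x

theorem probC_nonneg (hp : p ∈ Set.Icc (0 : ℝ) 1) (A : Set (E → Bool)) : 0 ≤ probC p A := by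
  rw [probC_eq_expC_indicator]
  exact expC_nonneg hp (Set.indicator_nonneg fun _ _ => zero_le_one)

theorem probC_mono (hp : p ∈ Set.Icc (0 : ℝ) 1) {A B : Set (E → Bool)} (h : A ⊆ B) :
    probC p A ≤ probC p B := by
  rw [probC_eq_expC_indicator, probC_eq_expC_indicator]
  exact expC_mono hp (Set.indicator_le_indicator_of_subset h fun _ => zero_le_one)

theorem probC_iUnion_le {ι : Type*} [Fintype ι] (hp : p ∈ Set.Icc (0 : ℝ) 1)
    (A : ι → Set (E → Bool)) : probC p (⋃ i, A i) ≤ ∑ i, probC p (A i) := by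
  simp only [probC_eq_expC_indicator, ← expC_sum]
  refine expC_mono hp fun x => ?_
  have nonneg : ∀ i, 0 ≤ (A i).indicator (1 : (E → Bool) → ℝ) x := fun i =>
    Set.indicator_nonneg (fun _ _ => zero_le_one) x
  by_cases hx : x ∈ ⋃ i, A i
  · obtain ⟨i, hi⟩ := Set.mem_iUnion.1 hx
    calc (⋃ i, A i).indicator (1 : (E → Bool) → ℝ) x
        = (A i).indicator 1 x := by rw [Set.indicator_of_mem hx, Set.indicator_of_mem hi]
      _ ≤ _ := Finset.single_le_sum (fun j _ => nonneg j) (Finset.mem_univ i)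
  · rw [Set.indicator_of_notMem hx]
    exact Finset.sum_nonneg fun i _ => nonneg i

end Expectation

section EdgeAverage

variable {E : Type*}

/-- The average of `f` over the coordinate `e`. -/
def edgeAvg (p : ℝ) (f : (E → Bool) → ℝ) (e : E) (x : E → Bool) : ℝ :=
  p * f (setEdge x e true) + (1 - p) * f (setEdge x e false)

/-- The discrete derivative of `f` in the coordinate `e`, the increment from `e` closed to
`e` open. -/
def partialDiff (f : (E → Bool) → ℝ) (e : E) (x : E → Bool) : ℝ :=
  f (setEdge x e true) - f (setEdge x e false)

/-- The total influence of the coordinates on `f`, which Russo's formula identifies with the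
derivative in `p` of the expectation. -/
def totalInfluence [Fintype E] (p : ℝ) (f : (E → Bool) → ℝ) : ℝ :=
  ∑ e, expC p (partialDiff f e)

theorem partialDiff_nonneg {f : (E → Bool) → ℝ} (hf : Monotone f) (e : E) (x : E → Bool) :
    0 ≤ partialDiff f e x :=
  sub_nonneg.2 (hf ((setEdge_false_le x e).trans (le_setEdge_true x e)))

@[simp]
theorem partialDiff_setEdge (f : (E → Bool) → ℝ) (e : E) (x : E → Bool) (b : Bool) :
    partialDiff f e (setEdge x e b) = partialDiff f e x := by
  simp only [partialDiff, setEdge_setEdge]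

theorem partialDiff_edgeAvg_self (p : ℝ) (f : (E → Bool) → ℝ) (e : E) (x : E → Bool) :
    partialDiff (edgeAvg p f e) e x = 0 := by
  simp [partialDiff, edgeAvg]

theorem partialDiff_edgeAvg {e a : E} (h : a ≠ e) (p : ℝ) (f : (E → Bool) → ℝ) :
    partialDiff (edgeAvg p f e) a = edgeAvg p (partialDiff f a) e := by
  funext x
  simp only [partialDiff, edgeAvg, setEdge_comm h]
  ring

theorem dependsOn_edgeAvg [DecidableEq E] {f : (E → Bool) → ℝ} {s : Finset E}
    (hf : DependsOn f (↑s)ᶜ) (p : ℝ) (e : E) : DependsOn (edgeAvg p f e) (↑(insert e s))ᶜ := by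
  intro x y hxy
  have agree : ∀ b, f (setEdge x e b) = f (setEdge y e b) := fun b => hf fun a ha => by
    by_cases h : a = e
    · simp [h]
    · rw [setEdge_apply_of_ne h, setEdge_apply_of_ne h]
      exact hxy a (by simpa [h] using ha)
  simp only [edgeAvg, agree]

section Russo

variable [Fintype E] [DecidableEq E]

theorem configProb_setEdge (p : ℝ) (x : E → Bool) (e : E) (b : Bool) :
    configProb p (setEdge x e b) = (if b then p else 1 - p) *
      ∏ a ∈ Finset.univ.erase e, if x a then p else 1 - p := by
  rw [configProb_eq_prod, ← Finset.mul_prod_erase _ _ (Finset.mem_univ e), setEdge_apply_self]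
  congr 1
  exact Finset.prod_congr rfl fun a ha => by rw [setEdge_apply_of_ne (Finset.ne_of_mem_erase ha)]

theorem two_mul_expC (p : ℝ) (f : (E → Bool) → ℝ) (e : E) :
    2 * expC p f = ∑ x : E → Bool,
      (∏ a ∈ Finset.univ.erase e, if x a then p else 1 - p) * edgeAvg p f e x := by
  rw [expC_eq_sum, two_mul_sum_eq_sum_setEdge e]
  refine Finset.sum_congr rfl fun x _ => ?_
  simp only [configProb_setEdge, edgeAvg, if_true, Bool.false_eq_true, if_false]
  ring

theorem hasDerivAt_configProb (p : ℝ) (x : E → Bool) :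
    HasDerivAt (fun q => configProb q x)
      (∑ e, (∏ a ∈ Finset.univ.erase e, if x a then p else 1 - p) * if x e then 1 else -1) p := by
  simp only [configProb_eq_prod]
  refine HasDerivAt.fun_finsetProd (f := fun e q => if x e then q else 1 - q) fun e _ => ?_
  cases x e
  · simpa using (hasDerivAt_id p).const_sub 1
  · simpa using hasDerivAt_id' p

end Russo

theorem deriv_expC [Fintype E] (p : ℝ) (f : (E → Bool) → ℝ) :
    deriv (fun q => expC q f) p = totalInfluence p f := by
  classical
  simp only [expC_eq_sum]
  rw [(HasDerivAt.fun_sum fun x _ => (hasDerivAt_configProb p x).mul_const (f x)).deriv]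
  simp only [Finset.sum_mul, totalInfluence]
  rw [Finset.sum_comm]
  refine Finset.sum_congr rfl fun e _ => mul_left_cancel₀ (two_ne_zero (α := ℝ)) ?_
  rw [two_mul_expC p _ e, two_mul_sum_eq_sum_setEdge e]
  refine Finset.sum_congr rfl fun x _ => ?_
  have unchanged : ∀ b, ∏ a ∈ Finset.univ.erase e, (if setEdge x e b a then p else 1 - p) =
      ∏ a ∈ Finset.univ.erase e, if x a then p else 1 - p := fun b =>
    Finset.prod_congr rfl fun a ha => by rw [setEdge_apply_of_ne (Finset.ne_of_mem_erase ha)]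
  simp only [unchanged, edgeAvg, setEdge_apply_self, partialDiff, setEdge_setEdge, if_true,
    Bool.false_eq_true, if_false]
  ring

variable [Finite E]

theorem expC_edgeAvg (p : ℝ) (f : (E → Bool) → ℝ) (e : E) : expC p (edgeAvg p f e) = expC p f := by
  classical
  cases nonempty_fintype E
  refine mul_left_cancel₀ (two_ne_zero (α := ℝ)) ?_
  have idem : ∀ x, edgeAvg p (edgeAvg p f e) e x = edgeAvg p f e x := fun x => by
    simp only [edgeAvg, setEdge_setEdge]
    ring
  simp only [two_mul_expC p _ e, idem]

theorem expC_sq_eq_edgeAvg (p : ℝ) (f : (E → Bool) → ℝ) (e : E) :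
    expC p (fun x => f x ^ 2) =
      expC p (fun x => edgeAvg p f e x ^ 2) +
        p * (1 - p) * expC p (fun x => partialDiff f e x ^ 2) := by
  rw [← expC_const_mul, ← expC_add, ← expC_edgeAvg p _ e]
  congr 1
  funext x
  simp only [edgeAvg, partialDiff]
  ring

theorem expC_comp_setEdge_true_le {p : ℝ} (hp : p ∈ Set.Ioc (0 : ℝ) 1) {f : (E → Bool) → ℝ}
    (hf : 0 ≤ f) (e : E) : expC p (fun x => f (setEdge x e true)) ≤ 1 / p * expC p f := by
  rw [← expC_edgeAvg p f e, one_div, ← div_eq_inv_mul, le_div_iff₀ hp.1, mul_comm,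
    ← expC_const_mul]
  exact expC_mono (Set.Ioc_subset_Icc_self hp) fun x =>
    le_add_of_nonneg_right (mul_nonneg (sub_nonneg.2 hp.2) (hf _))

theorem expC_sq_partialDiff_edgeAvg_le {p : ℝ} (hp : p ∈ Set.Icc (0 : ℝ) 1)
    (f : (E → Bool) → ℝ) (e a : E) :
    expC p (fun x => partialDiff (edgeAvg p f e) a x ^ 2) ≤
      expC p (fun x => partialDiff f a x ^ 2) := by
  by_cases h : a = e
  · subst h
    refine expC_mono hp fun x => ?_
    simpa only [partialDiff_edgeAvg_self, zero_pow two_ne_zero] using sq_nonneg _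
  · rw [partialDiff_edgeAvg h, expC_sq_eq_edgeAvg p (partialDiff f a) e]
    exact le_add_of_nonneg_right <| mul_nonneg (mul_nonneg hp.1 (sub_nonneg.2 hp.2)) <|
      expC_nonneg hp fun x => sq_nonneg _

theorem exists_dependsOn_compl_expC_sq_le {p : ℝ} (hp : p ∈ Set.Icc (0 : ℝ) 1)
    (f : (E → Bool) → ℝ) (s : Finset E) :
    ∃ g : (E → Bool) → ℝ, DependsOn g (↑s)ᶜ ∧ expC p g = expC p f ∧
      expC p (fun x => f x ^ 2) ≤ expC p (fun x => g x ^ 2) +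
        p * (1 - p) * ∑ e ∈ s, expC p (fun x => partialDiff f e x ^ 2) ∧
      ∀ e, expC p (fun x => partialDiff g e x ^ 2) ≤ expC p (fun x => partialDiff f e x ^ 2) := by
  classical
  induction s using Finset.induction_on with
  | empty => exact ⟨f, by simpa using dependsOn_univ f, rfl, by simp, fun e => le_rfl⟩
  | insert a s ha ih =>
    obtain ⟨g, depends, mean, second, diff⟩ := ih
    refine ⟨edgeAvg p g a, dependsOn_edgeAvg depends p a, (expC_edgeAvg p g a).trans mean, ?_,
      fun e => (expC_sq_partialDiff_edgeAvg_le hp g a e).trans (diff e)⟩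
    have diff_a := mul_le_mul_of_nonneg_left (diff a) (mul_nonneg hp.1 (sub_nonneg.2 hp.2))
    rw [Finset.sum_insert ha, mul_add]
    linarith [expC_sq_eq_edgeAvg p g a]

theorem varC_le_sum_sq_partialDiff {E : Type*} [Fintype E] {p : ℝ} (hp : p ∈ Set.Icc (0 : ℝ) 1)
    (f : (E → Bool) → ℝ) :
    varC p f ≤ p * (1 - p) * ∑ e, expC p (fun x => partialDiff f e x ^ 2) := by
  obtain ⟨g, depends, mean, second, -⟩ := exists_dependsOn_compl_expC_sq_le hp f Finset.univ
  have const : ∀ x, g x = g fun _ => false := fun x => depends fun e he => by simp at he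
  have mean_g : expC p g = g fun _ => false := by
    rw [← expC_const (E := E) p (g fun _ => false), ← funext const]
  have second_g : expC p (fun x => g x ^ 2) = expC p f ^ 2 := by
    simp only [const, expC_const, ← mean, mean_g]
  rw [varC, sub_le_iff_le_add', ← second_g]
  exact second

end EdgeAverage

section LargeDifferences

variable {E : Type*} [Fintype E]

open Classical in
/-- The closed coordinates whose opening increases `f` by at least `k`. -/
def bigDiffs (f : (E → Bool) → ℝ) (k : ℝ) (x : E → Bool) : Finset E :=
  {e | x e = false ∧ k ≤ partialDiff f e x}

variable {p : ℝ} {f : (E → Bool) → ℝ} {M : ℝ}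

theorem mem_bigDiffs {k : ℝ} {x : E → Bool} {e : E} :
    e ∈ bigDiffs f k x ↔ x e = false ∧ k ≤ partialDiff f e x := by
  simp [bigDiffs]

theorem totalInfluence_nonneg (hp : p ∈ Set.Icc (0 : ℝ) 1) (hf : Monotone f) :
    0 ≤ totalInfluence p f :=
  Finset.sum_nonneg fun e _ => expC_nonneg hp (partialDiff_nonneg hf e)

theorem varC_le_mul_totalInfluence (hp : p ∈ Set.Icc (0 : ℝ) 1) (hf : Monotone f)
    (hM : ∀ e x, partialDiff f e x ≤ M) : varC p f ≤ M * totalInfluence p f := by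
  have pq : p * (1 - p) ≤ 1 := by nlinarith [sq_nonneg p, hp.2]
  refine (varC_le_sum_sq_partialDiff hp f).trans ?_
  rw [totalInfluence, Finset.mul_sum, Finset.mul_sum]
  refine Finset.sum_le_sum fun e _ => ?_
  rw [← expC_const_mul p M]
  calc p * (1 - p) * expC p (fun x => partialDiff f e x ^ 2)
      ≤ 1 * expC p (fun x => partialDiff f e x ^ 2) :=
        mul_le_mul_of_nonneg_right pq (expC_nonneg hp fun x => sq_nonneg _)
    _ ≤ expC p (fun x => M * partialDiff f e x) := by
        rw [one_mul]
        refine expC_mono hp fun x => ?_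
        rw [pow_two]
        exact mul_le_mul_of_nonneg_right (hM e x) (partialDiff_nonneg hf e x)

theorem one_sub_mul_expC_indicator_partialDiff (f : (E → Bool) → ℝ) (p k : ℝ) (e : E) :
    (1 - p) * expC p ({x | k ≤ partialDiff f e x}.indicator 1) =
      expC p ({x | e ∈ bigDiffs f k x}.indicator 1) := by
  rw [← expC_const_mul, ← expC_edgeAvg p ({x | e ∈ bigDiffs f k x}.indicator 1) e]
  congr 1
  funext x
  by_cases h : k ≤ partialDiff f e x <;> simp [edgeAvg, mem_bigDiffs, h]

theorem expC_card_bigDiffs (f : (E → Bool) → ℝ) (p k : ℝ) :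
    expC p (fun x => ((bigDiffs f k x).card : ℝ)) =
      ∑ e, (1 - p) * expC p ({x | k ≤ partialDiff f e x}.indicator 1) := by
  classical
  simp only [one_sub_mul_expC_indicator_partialDiff, ← expC_sum]
  congr 1
  funext x
  simp [Set.indicator_apply]

theorem varC_le_add_card_bigDiffs (hp : p ∈ Set.Icc (0 : ℝ) 1) (hf : Monotone f)
    (hM : ∀ e x, partialDiff f e x ≤ M) {k : ℝ} (hk : 0 ≤ k) :
    varC p f ≤ k * totalInfluence p f +
      M ^ 2 * expC p (fun x => ((bigDiffs f k x).card : ℝ)) := by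
  have q_nonneg : 0 ≤ 1 - p := sub_nonneg.2 hp.2
  refine (varC_le_sum_sq_partialDiff hp f).trans ?_
  rw [expC_card_bigDiffs, totalInfluence, Finset.mul_sum, Finset.mul_sum, Finset.mul_sum,
    ← Finset.sum_add_distrib]
  refine Finset.sum_le_sum fun e _ => ?_
  set large := {x | k ≤ partialDiff f e x}
  have split : expC p (fun x => partialDiff f e x ^ 2) ≤
      k * expC p (partialDiff f e) + M ^ 2 * expC p (large.indicator 1) := by
    rw [← expC_const_mul, ← expC_const_mul, ← expC_add]
    refine expC_mono hp fun x => ?_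
    have nonneg := partialDiff_nonneg hf e x
    by_cases hx : x ∈ large
    · rw [Set.indicator_of_mem hx, Pi.one_apply, mul_one]
      exact (pow_le_pow_left₀ nonneg (hM e x) 2).trans (le_add_of_nonneg_left (by positivity))
    · rw [Set.indicator_of_notMem hx, mul_zero, add_zero, pow_two]
      exact mul_le_mul_of_nonneg_right (not_le.1 hx).le nonneg
  have small_nonneg : 0 ≤ k * expC p (partialDiff f e) :=
    mul_nonneg hk (expC_nonneg hp (partialDiff_nonneg hf e))
  have large_nonneg : 0 ≤ M ^ 2 * ((1 - p) * expC p (large.indicator 1)) := by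
    have := expC_nonneg hp (Set.indicator_nonneg (s := large) fun _ _ => zero_le_one' ℝ)
    positivity
  have pq : p * (1 - p) ≤ 1 := by nlinarith [sq_nonneg p, hp.2]
  calc p * (1 - p) * expC p (fun x => partialDiff f e x ^ 2)
      ≤ p * (1 - p) * (k * expC p (partialDiff f e) + M ^ 2 * expC p (large.indicator 1)) :=
        mul_le_mul_of_nonneg_left split (mul_nonneg hp.1 q_nonneg)
    _ = p * (1 - p) * (k * expC p (partialDiff f e)) +
        p * (M ^ 2 * ((1 - p) * expC p (large.indicator 1))) := by ring
    _ ≤ _ := add_le_add (mul_le_of_le_one_left small_nonneg pq)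
        (mul_le_of_le_one_left large_nonneg hp.2)

theorem expC_card_bigDiffs_le (hp : p ∈ Set.Icc (0 : ℝ) 1) {k c : ℝ} (hc : 0 ≤ c)
    {A : Set (E → Bool)} (hA : ∀ x ∈ A, ((bigDiffs f k x).card : ℝ) ≤ c) :
    expC p (fun x => ((bigDiffs f k x).card : ℝ)) ≤
      c * probC p {x | (bigDiffs f k x).Nonempty} + Fintype.card E * probC p Aᶜ := by
  rw [probC_eq_expC_indicator, probC_eq_expC_indicator, ← expC_const_mul, ← expC_const_mul,
    ← expC_add]
  refine expC_mono hp fun x => ?_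
  rcases (bigDiffs f k x).eq_empty_or_nonempty with empty | nonempty
  · by_cases hx : x ∈ A <;> simp [empty, hx]
  · by_cases hx : x ∈ A
    · simpa [nonempty, hx] using hA x hx
    · have card_le : ((bigDiffs f k x).card : ℝ) ≤ Fintype.card E :=
        Nat.cast_le.2 (Finset.card_le_univ _)
      simpa [nonempty, hx] using card_le.trans (le_add_of_nonneg_left hc)

end LargeDifferences

section StoppingSet

variable {E : Type*}

/-- A random set of coordinates is a stopping set if it can be revealed by exploration: its value
at `x` is determined by the restriction of `x` to that value. -/
def IsStoppingSet (T : (E → Bool) → Finset E) : Prop :=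
  ∀ x y, (∀ e ∈ T x, y e = x e) → T y = T x

/-- The number of open coordinates in `A`, minus the value `p * |A|` expected for a
deterministic `A`. -/
def centeredSum (p : ℝ) (A : Finset E) (x : E → Bool) : ℝ :=
  ∑ e ∈ A, ((if x e then 1 else 0) - p)

theorem exp_le_one_add_add_sq {u : ℝ} (hu : |u| ≤ 1) : Real.exp u ≤ 1 + u + u ^ 2 := by
  linarith [(abs_le.1 (Real.abs_exp_sub_one_sub_id_le hu)).2]

theorem bernoulli_mgf_le {p s : ℝ} (hp : p ∈ Set.Icc (0 : ℝ) 1) (hs : |s| ≤ 1) :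
    p * Real.exp (s * (1 - p)) + (1 - p) * Real.exp (s * (0 - p)) ≤ Real.exp (s ^ 2) := by
  have bound : ∀ v : ℝ, |v| ≤ 1 → Real.exp (s * v) ≤ 1 + s * v + s ^ 2 := fun v hv => by
    have sv : |s * v| ≤ 1 := abs_mul s v ▸ mul_le_one₀ hs (abs_nonneg v) hv
    have sq : (s * v) ^ 2 ≤ s ^ 2 :=
      mul_pow s v 2 ▸ mul_le_of_le_one_right (sq_nonneg s) ((sq_le_one_iff_abs_le_one v).2 hv)
    linarith [exp_le_one_add_add_sq sv]
  have up := bound (1 - p) (abs_le.2 ⟨by linarith [hp.2], by linarith [hp.1]⟩)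
  have down := bound (0 - p) (abs_le.2 ⟨by linarith [hp.2], by linarith [hp.1]⟩)
  calc p * Real.exp (s * (1 - p)) + (1 - p) * Real.exp (s * (0 - p))
      ≤ p * (1 + s * (1 - p) + s ^ 2) + (1 - p) * (1 + s * (0 - p) + s ^ 2) :=
        add_le_add (mul_le_mul_of_nonneg_left up hp.1)
          (mul_le_mul_of_nonneg_left down (sub_nonneg.2 hp.2))
    _ = s ^ 2 + 1 := by ring
    _ ≤ Real.exp (s ^ 2) := Real.add_one_le_exp _

variable {T : (E → Bool) → Finset E}

theorem sum_prod_eq_one [Fintype E] [DecidableEq E] {w : E → Bool → ℝ}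
    (hw : ∀ e, w e true + w e false = 1) : ∑ x : E → Bool, ∏ e, w e (x e) = 1 := by
  rw [← Fintype.prod_sum]
  simp only [Fintype.sum_bool, hw, Finset.prod_const_one]

-- Two independent configurations, of laws `w'` and `w`, exchange their coordinates outside `T`.
theorem IsStoppingSet.sum_prod_ite_eq_one [Fintype E] [DecidableEq E] (hT : IsStoppingSet T)
    {w w' : Bool → ℝ} (hw : w true + w false = 1) (hw' : w' true + w' false = 1) :
    ∑ x : E → Bool, ∏ e, (if e ∈ T x then w' (x e) else w (x e)) = 1 := by
  let exchange : (E → Bool) × (E → Bool) → (E → Bool) × (E → Bool) := fun z =>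
    ((T z.1).piecewise z.1 z.2, (T z.1).piecewise z.2 z.1)
  have T_piecewise : ∀ x y, T ((T x).piecewise x y) = T x := fun x y => hT _ _ fun e he => by
    simp only [Finset.piecewise, he, if_true]
  have involutive : Function.Involutive exchange := fun z => by
    ext e <;> by_cases he : e ∈ T z.1 <;>
      simp [exchange, Finset.piecewise_eq_of_mem, Finset.piecewise_eq_of_notMem, T_piecewise, he]
  have exchanged : ∀ z : (E → Bool) × (E → Bool),
      (∏ e, w' ((exchange z).1 e)) * ∏ e, w ((exchange z).2 e) =
        (∏ e, if e ∈ T z.1 then w' (z.1 e) else w (z.1 e)) *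
          ∏ e, if e ∈ T z.1 then w (z.2 e) else w' (z.2 e) := fun z => by
    simp only [← Finset.prod_mul_distrib]
    refine Finset.prod_congr rfl fun e _ => ?_
    by_cases he : e ∈ T z.1 <;> simp only [exchange, Finset.piecewise, he, if_true, if_false]
    exact mul_comm _ _
  have total := Equiv.sum_comp involutive.toPerm fun z : (E → Bool) × (E → Bool) =>
    (∏ e, w' (z.1 e)) * ∏ e, w (z.2 e)
  have second : ∀ x, ∑ y : E → Bool, ∏ e, (if e ∈ T x then w (y e) else w' (y e)) = 1 := fun x =>
    sum_prod_eq_one (w := fun e b => if e ∈ T x then w b else w' b) fun e => by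
      split_ifs <;> assumption
  have total_w : ∑ y : E → Bool, ∏ e, w (y e) = 1 := sum_prod_eq_one (w := fun _ => w) fun _ => hw
  have total_w' : ∑ x : E → Bool, ∏ e, w' (x e) = 1 :=
    sum_prod_eq_one (w := fun _ => w') fun _ => hw'
  simpa only [Function.Involutive.coe_toPerm, exchanged, Fintype.sum_prod_type, ← Finset.mul_sum,
    second, total_w, total_w', mul_one] using total

theorem IsStoppingSet.expC_prod_eq_one [Finite E] (hT : IsStoppingSet T) {p : ℝ}
    {g : Bool → ℝ} (hg : p * g true + (1 - p) * g false = 1) :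
    expC p (fun x => ∏ e ∈ T x, g (x e)) = 1 := by
  classical
  cases nonempty_fintype E
  rw [expC_eq_sum, ← hT.sum_prod_ite_eq_one (w := fun b => if b then p else 1 - p)
    (w' := fun b => (if b then p else 1 - p) * g b) (by simp) (by simpa using hg)]
  refine Finset.sum_congr rfl fun x _ => ?_
  rw [configProb_eq_prod, ← Finset.univ_inter (T x), ← Finset.prod_ite_mem,
    ← Finset.prod_mul_distrib]
  refine Finset.prod_congr rfl fun e _ => ?_
  rw [Finset.univ_inter]
  split_ifs <;> simp

variable [Fintype E]

theorem IsStoppingSet.expC_exp_mul_centeredSum_le (hT : IsStoppingSet T) {p s : ℝ}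
    (hp : p ∈ Set.Icc (0 : ℝ) 1) (hs : |s| ≤ 1) :
    expC p (fun x => Real.exp (s * centeredSum p (T x) x)) ≤
      Real.exp (s ^ 2 * Fintype.card E) := by
  set g : Bool → ℝ := fun b => Real.exp (s * ((if b then 1 else 0) - p)) with g_def
  set Z := p * g true + (1 - p) * g false with Z_def
  have Z_le : Z ≤ Real.exp (s ^ 2) := by
    simpa only [Z_def, g_def, if_true, Bool.false_eq_true, if_false] using bernoulli_mgf_le hp hs
  have Z_pos : 0 < Z := by
    rcases hp.1.eq_or_lt with rfl | p_pos
    · simp only [Z_def, zero_mul, zero_add, sub_zero, one_mul]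
      exact Real.exp_pos _
    · exact add_pos_of_pos_of_nonneg (mul_pos p_pos (Real.exp_pos _))
        (mul_nonneg (sub_nonneg.2 hp.2) (Real.exp_pos _).le)
  have normalized : p * (g true / Z) + (1 - p) * (g false / Z) = 1 := by
    rw [← mul_div_assoc, ← mul_div_assoc, ← add_div, ← Z_def, div_self Z_pos.ne']
  rw [← mul_one (Real.exp _), ← hT.expC_prod_eq_one (g := fun b => g b / Z) normalized,
    ← expC_const_mul]
  refine expC_mono hp fun x => ?_
  have norm_factor : Z ^ (T x).card ≤ Real.exp (s ^ 2 * Fintype.card E) := calc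
    Z ^ (T x).card ≤ Real.exp (s ^ 2) ^ (T x).card := pow_le_pow_left₀ Z_pos.le Z_le _
    _ ≤ Real.exp (s ^ 2) ^ Fintype.card E :=
      pow_le_pow_right₀ (Real.one_le_exp (sq_nonneg s)) (Finset.card_le_univ _)
    _ = Real.exp (s ^ 2 * Fintype.card E) := by rw [← Real.exp_nat_mul, mul_comm]
  calc Real.exp (s * centeredSum p (T x) x)
      = Z ^ (T x).card * ∏ e ∈ T x, g (x e) / Z := by
        rw [Finset.prod_div_distrib, Finset.prod_const, mul_div_cancel₀ _ (by positivity),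
          ← Real.exp_sum, centeredSum, Finset.mul_sum]
    _ ≤ _ := mul_le_mul_of_nonneg_right norm_factor
        (Finset.prod_nonneg fun e _ => div_nonneg (Real.exp_pos _).le Z_pos.le)

theorem IsStoppingSet.probC_abs_centeredSum_ge_le (hT : IsStoppingSet T) {p s : ℝ}
    (hp : p ∈ Set.Icc (0 : ℝ) 1) (hs : s ∈ Set.Icc (0 : ℝ) 1) (t : ℝ) :
    probC p {x | t ≤ |centeredSum p (T x) x|} ≤
      2 * Real.exp (s ^ 2 * Fintype.card E - s * t) := by
  have upper := hT.expC_exp_mul_centeredSum_le (s := s) hp (abs_le.2 ⟨by linarith [hs.1], hs.2⟩)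
  have lower := hT.expC_exp_mul_centeredSum_le (s := -s) hp
    (abs_le.2 ⟨by linarith [hs.2], by linarith [hs.1]⟩)
  have markov : probC p {x | t ≤ |centeredSum p (T x) x|} * Real.exp (s * t) ≤
      expC p fun x => Real.exp (s * centeredSum p (T x) x) +
        Real.exp (-s * centeredSum p (T x) x) := by
    refine probC_mul_le_expC hp (fun x => by positivity) fun x hx => ?_
    rcases le_abs.1 (show t ≤ _ from hx) with h | h
    · exact (Real.exp_le_exp.2 (mul_le_mul_of_nonneg_left h hs.1)).trans
        (le_add_of_nonneg_right (Real.exp_pos _).le)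
    · refine (Real.exp_le_exp.2 ?_).trans (le_add_of_nonneg_left (Real.exp_pos _).le)
      linarith [mul_le_mul_of_nonneg_left h hs.1]
  rw [expC_add] at markov
  rw [Real.exp_sub, ← mul_div_assoc, le_div_iff₀ (Real.exp_pos _)]
  linarith [neg_sq s ▸ lower]

end StoppingSet

theorem probC_le_card_closed_le {E : Type*} [Fintype E] {p s : ℝ} (hp : p ∈ Set.Icc (0 : ℝ) 1)
    (hs : s ∈ Set.Ioc (0 : ℝ) 1) (m : ℕ) :
    probC p {x : E → Bool | m ≤ (Finset.univ.filter fun e => x e = false).card} ≤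
      s ^ m * Real.exp (Fintype.card E * ((1 - p) / s)) := by
  have moment : expC p (fun x : E → Bool => ∏ e, if x e then 1 else 1 / s) ≤
      Real.exp (Fintype.card E * ((1 - p) / s)) := by
    rw [expC_prod p fun (_ : E) (b : Bool) => if b then 1 else 1 / s]
    simp only [if_true, Bool.false_eq_true, if_false, mul_one, mul_one_div, Finset.prod_const,
      Finset.card_univ]
    rw [Real.exp_nat_mul]
    have quotient_nonneg : 0 ≤ (1 - p) / s := div_nonneg (sub_nonneg.2 hp.2) hs.1.le
    refine pow_le_pow_left₀ (add_nonneg hp.1 quotient_nonneg) ?_ _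
    linarith [Real.add_one_le_exp ((1 - p) / s), hp.2]
  have markov := probC_mul_le_expC (c := (1 / s) ^ m) hp
    (A := {x : E → Bool | m ≤ (Finset.univ.filter fun e => x e = false).card})
    (f := fun x => ∏ e, if x e then 1 else 1 / s)
    (fun x => Finset.prod_nonneg fun e _ => by split_ifs <;> simp [hs.1.le]) fun x hx => by
      have closed : ∀ e, (if x e then (1 : ℝ) else 1 / s) = if x e = false then 1 / s else 1 :=
        fun e => by cases x e <;> simp
      simp only [closed]
      rw [← Finset.prod_filter, Finset.prod_const]
      exact pow_le_pow_right₀ ((one_le_div hs.1).2 hs.2) hx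
  rw [one_div_pow, mul_one_div, div_le_iff₀ (pow_pos hs.1 m)] at markov
  exact markov.trans (by rw [mul_comm]; exact mul_le_mul_of_nonneg_left moment (pow_pos hs.1 m).le)

section Cluster

variable {V : Type*} {G : SimpleGraph V} {x y : G.edgeSet → Bool}

theorem percoGraph_adj {u v : V} :
    (percoGraph G x).Adj u v ↔ ∃ h : G.Adj u v, x ⟨s(u, v), h⟩ = true := by
  rw [percoGraph, SimpleGraph.fromEdgeSet_adj]
  exact ⟨fun h => h.1, fun h => ⟨h, h.1.ne⟩⟩

theorem percoGraph_mono (h : x ≤ y) : percoGraph G x ≤ percoGraph G y := by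
  intro u v
  rw [percoGraph_adj, percoGraph_adj]
  exact fun ⟨adj, is_open⟩ => ⟨adj, Bool.le_iff_imp.1 (h _) is_open⟩

theorem adj_or_eq_of_percoGraph_setEdge_adj {e : G.edgeSet} {b : Bool} {a c : V}
    (h : (percoGraph G (setEdge x e b)).Adj a c) : (percoGraph G x).Adj a c ∨ s(a, c) = e := by
  obtain ⟨adj, is_open⟩ := percoGraph_adj.1 h
  by_cases he : (⟨s(a, c), adj⟩ : G.edgeSet) = e
  · exact Or.inr (congrArg Subtype.val he)
  · exact Or.inl (percoGraph_adj.2 ⟨adj, by rwa [setEdge_apply_of_ne he] at is_open⟩)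

variable [Fintype V]

open Classical in
/-- The open cluster of `v`, that is `percoComp G x v` as a `Finset`. -/
def cluster (G : SimpleGraph V) (x : G.edgeSet → Bool) (v : V) : Finset V :=
  {w | (percoGraph G x).Reachable v w}

theorem mem_cluster {v w : V} : w ∈ cluster G x v ↔ (percoGraph G x).Reachable v w := by
  simp [cluster]

theorem mem_cluster_self (x : G.edgeSet → Bool) (v : V) : v ∈ cluster G x v :=
  mem_cluster.2 (SimpleGraph.Reachable.refl v)

theorem cluster_eq_of_mem {u v : V} (h : u ∈ cluster G x v) : cluster G x u = cluster G x v := by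
  have reach := mem_cluster.1 h
  ext w
  simp only [mem_cluster]
  exact ⟨reach.trans, reach.symm.trans⟩

theorem disjoint_cluster {u v : V} (h : v ∉ cluster G x u) :
    Disjoint (cluster G x u) (cluster G x v) :=
  Finset.disjoint_left.2 fun _ hu hv =>
    h (mem_cluster.2 ((mem_cluster.1 hu).trans (mem_cluster.1 hv).symm))

theorem cluster_mono (h : x ≤ y) (v : V) : cluster G x v ⊆ cluster G y v := fun _ hw =>
  mem_cluster.2 ((mem_cluster.1 hw).mono (percoGraph_mono h))

theorem compSize_eq_card_cluster (x : G.edgeSet → Bool) (v : V) :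
    compSize G x v = (cluster G x v).card := by
  rw [compSize, ← Set.ncard_coe_finset]
  congr 1
  ext w
  simp [percoComp, mem_cluster]

theorem card_cluster_le_largestComp (x : G.edgeSet → Bool) (v : V) :
    (cluster G x v).card ≤ largestComp G x := by
  rw [← compSize_eq_card_cluster]
  exact le_csSup (Set.finite_range _).bddAbove ⟨v, rfl⟩

theorem exists_card_cluster_eq_largestComp [Nonempty V] (x : G.edgeSet → Bool) :
    ∃ v, (cluster G x v).card = largestComp G x := by
  obtain ⟨v, hv⟩ := Nat.sSup_mem (Set.range_nonempty (compSize G x)) (Set.finite_range _).bddAbove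
  exact ⟨v, (compSize_eq_card_cluster x v).symm.trans hv⟩

theorem largestComp_le {m : ℕ} (h : ∀ v, (cluster G x v).card ≤ m) : largestComp G x ≤ m := by
  rcases isEmpty_or_nonempty V with _ | _
  · simp [largestComp, Set.range_eq_empty]
  · obtain ⟨v, hv⟩ := exists_card_cluster_eq_largestComp x
    exact hv ▸ h v

theorem largestComp_le_card (x : G.edgeSet → Bool) : largestComp G x ≤ Fintype.card V :=
  largestComp_le fun _ => Finset.card_le_univ _

theorem largestComp_mono {V : Type*} [Finite V] {G : SimpleGraph V} {x y : G.edgeSet → Bool}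
    (h : x ≤ y) : largestComp G x ≤ largestComp G y := by
  cases nonempty_fintype V
  exact largestComp_le fun v => (Finset.card_le_card (cluster_mono h v)).trans
    (card_cluster_le_largestComp y v)

theorem reachable_or_mem_of_percoGraph_setEdge {u v : V} {h : G.Adj u v} {b : Bool} {w z : V}
    (reach : (percoGraph G (setEdge x ⟨s(u, v), h⟩ b)).Reachable w z) :
    (percoGraph G x).Reachable w z ∨
      (w ∈ cluster G x u ∨ w ∈ cluster G x v) ∧ (z ∈ cluster G x u ∨ z ∈ cluster G x v) := by
  have closed : ∀ {a c}, (percoGraph G x).Reachable a c →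
      a ∈ cluster G x u ∨ a ∈ cluster G x v → c ∈ cluster G x u ∨ c ∈ cluster G x v := by
    simp only [mem_cluster]
    exact fun hac => Or.imp (·.trans hac) (·.trans hac)
  obtain ⟨walk⟩ := reach
  induction walk with
  | nil => exact Or.inl (SimpleGraph.Reachable.refl _)
  | cons step _ ih =>
    rcases adj_or_eq_of_percoGraph_setEdge_adj step with adj | joining
    · exact ih.imp adj.reachable.trans fun hz => ⟨closed adj.reachable.symm hz.1, hz.2⟩
    · rcases Sym2.eq_iff.1 joining with ⟨rfl, rfl⟩ | ⟨rfl, rfl⟩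
      · exact Or.inr ⟨Or.inl (mem_cluster_self x _),
          ih.elim (closed · (Or.inr (mem_cluster_self x _))) And.right⟩
      · exact Or.inr ⟨Or.inr (mem_cluster_self x _),
          ih.elim (closed · (Or.inl (mem_cluster_self x _))) And.right⟩

theorem largestComp_setEdge_le (x : G.edgeSet → Bool) {u v : V} (h : G.Adj u v) (b : Bool) :
    largestComp G (setEdge x ⟨s(u, v), h⟩ b) ≤ largestComp G x ∨
      v ∉ cluster G x u ∧ largestComp G (setEdge x ⟨s(u, v), h⟩ b) ≤
        (cluster G x u).card + (cluster G x v).card := by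
  classical
  have bound : largestComp G (setEdge x ⟨s(u, v), h⟩ b) ≤
      max (largestComp G x) (cluster G x u ∪ cluster G x v).card := largestComp_le fun w => by
    by_cases hw : w ∈ cluster G x u ∪ cluster G x v
    · refine le_max_of_le_right (Finset.card_le_card fun z hz => ?_)
      rcases reachable_or_mem_of_percoGraph_setEdge (mem_cluster.1 hz) with reach | ⟨-, hz⟩
      · simp only [Finset.mem_union, mem_cluster] at hw ⊢
        exact hw.imp (·.trans reach) (·.trans reach)
      · exact Finset.mem_union.2 hz
    · refine le_max_of_le_left
        ((Finset.card_le_card fun z hz => ?_).trans (card_cluster_le_largestComp x w))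
      rcases reachable_or_mem_of_percoGraph_setEdge (mem_cluster.1 hz) with reach | ⟨hw', -⟩
      · exact mem_cluster.2 reach
      · exact absurd (Finset.mem_union.2 hw') hw
  by_cases huv : v ∈ cluster G x u
  · rw [cluster_eq_of_mem huv, Finset.union_self,
      max_eq_left (card_cluster_le_largestComp x u)] at bound
    exact Or.inl bound
  · exact (le_max_iff.1 bound).imp_right fun hS => ⟨huv, hS.trans (Finset.card_union_le _ _)⟩

/-- The size of the largest component, as a real random variable. -/
def realLargestComp {V : Type*} (G : SimpleGraph V) (x : G.edgeSet → Bool) : ℝ :=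
  largestComp G x

theorem monotone_realLargestComp {V : Type*} [Finite V] (G : SimpleGraph V) :
    Monotone (realLargestComp G) := fun _ _ h => Nat.cast_le.2 (largestComp_mono h)

theorem partialDiff_realLargestComp_le (e : G.edgeSet) (x : G.edgeSet → Bool) :
    partialDiff (realLargestComp G) e x ≤ Fintype.card V :=
  (sub_le_self _ (Nat.cast_nonneg _)).trans (Nat.cast_le.2 (largestComp_le_card _))

theorem partialDiff_of_closed {E : Type*} (f : (E → Bool) → ℝ) {e : E} {x : E → Bool}
    (h : x e = false) : partialDiff f e x = f (setEdge x e true) - f x := by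
  rw [partialDiff, ← h, setEdge_eq_self]

theorem sub_le_partialDiff {E : Type*} {f : (E → Bool) → ℝ} (hf : Monotone f) (e : E)
    (x : E → Bool) : f (setEdge x e true) - f x ≤ partialDiff f e x :=
  sub_le_sub_left (hf (setEdge_false_le x e)) _

theorem add_le_card_cluster_of_mem_bigDiffs [Fintype G.edgeSet] {k : ℝ} (hk : 0 < k) {u v : V}
    {h : G.Adj u v} (he : ⟨s(u, v), h⟩ ∈ bigDiffs (realLargestComp G) k x) :
    v ∉ cluster G x u ∧
      realLargestComp G x + k ≤ (cluster G x u).card + (cluster G x v).card := by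
  obtain ⟨closed, large⟩ := mem_bigDiffs.1 he
  rw [partialDiff_of_closed _ closed, realLargestComp] at large
  rcases largestComp_setEdge_le x h true with le | ⟨separate, le⟩
  · have := Nat.cast_le (α := ℝ).2 le
    rw [realLargestComp] at large
    linarith
  · have := Nat.cast_le (α := ℝ).2 le
    push_cast at this
    exact ⟨separate, by linarith⟩

theorem le_card_cluster_of_mem_bigDiffs [Fintype G.edgeSet] {k : ℝ} (hk : 0 < k) {u v : V}
    {h : G.Adj u v} (he : ⟨s(u, v), h⟩ ∈ bigDiffs (realLargestComp G) k x) :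
    v ∉ cluster G x u ∧ k ≤ (cluster G x u).card ∧ k ≤ (cluster G x v).card := by
  obtain ⟨separate, le_sum⟩ := add_le_card_cluster_of_mem_bigDiffs hk he
  have max_u := Nat.cast_le (α := ℝ).2 (card_cluster_le_largestComp x u)
  have max_v := Nat.cast_le (α := ℝ).2 (card_cluster_le_largestComp x v)
  rw [realLargestComp] at le_sum
  exact ⟨separate, by linarith, by linarith⟩

theorem one_le_partialDiff_of_adj {z : V} (hz : (cluster G x z).card = largestComp G x) {a c : V}
    (ha : a ∈ cluster G x z) (hc : c ∉ cluster G x z) (h : G.Adj a c) :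
    1 ≤ partialDiff (realLargestComp G) ⟨s(a, c), h⟩ x := by
  classical
  refine le_trans ?_ (sub_le_partialDiff (monotone_realLargestComp G) _ x)
  set y := setEdge x ⟨s(a, c), h⟩ true
  have grows : insert c (cluster G x z) ⊆ cluster G y a := by
    refine Finset.insert_subset (mem_cluster.2 ?_) ?_
    · exact (percoGraph_adj.2 ⟨h, setEdge_apply_self x _ true⟩).reachable
    · exact cluster_eq_of_mem ha ▸ cluster_mono (le_setEdge_true x _) a
  have larger := (Finset.card_le_card grows).trans (card_cluster_le_largestComp y a)
  rw [Finset.card_insert_of_notMem hc, hz] at larger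
  have := Nat.cast_le (α := ℝ).2 larger
  push_cast at this
  rw [realLargestComp, realLargestComp]
  linarith

end Cluster

section IncidentEdges

variable {V : Type*} {G : SimpleGraph V} [Fintype G.edgeSet] {d : ℕ}

open Classical in
/-- The edges of `G` incident to `v`, as coordinates of a configuration. -/
def incidentEdges (G : SimpleGraph V) [Fintype G.edgeSet] (v : V) : Finset G.edgeSet :=
  {e | v ∈ (e : Sym2 V)}

theorem mem_incidentEdges {v : V} {e : G.edgeSet} : e ∈ incidentEdges G v ↔ v ∈ (e : Sym2 V) := by
  simp [incidentEdges]

theorem sum_sum_incidentEdges [Fintype V] (g : G.edgeSet → ℝ) :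
    ∑ v, ∑ e ∈ incidentEdges G v, g e = 2 * ∑ e, g e := by
  classical
  have ends : ∀ e : G.edgeSet, (Finset.univ.filter (· ∈ (e : Sym2 V))).card = 2 := fun e => by
    rw [← Sym2.card_toFinset_of_not_isDiag _ (G.not_isDiag_of_mem_edgeSet e.2)]
    congr 1
    ext v
    simp
  simp only [incidentEdges, Finset.sum_filter]
  rw [Finset.sum_comm, Finset.mul_sum]
  refine Finset.sum_congr rfl fun e _ => ?_
  rw [← Finset.sum_filter, Finset.sum_const, ends, nsmul_eq_mul, Nat.cast_ofNat]

theorem card_incidentEdges_le (hd : DegreeLE G d) (v : V) : (incidentEdges G v).card ≤ d := by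
  classical
  have image : (↑) '' (incidentEdges G v : Set G.edgeSet) = G.incidenceSet v := by
    ext e
    simp [mem_incidentEdges, SimpleGraph.incidenceSet, and_comm]
  calc (incidentEdges G v).card = (G.incidenceSet v).ncard := by
        rw [← image, Set.ncard_image_of_injective _ Subtype.val_injective, Set.ncard_coe_finset]
    _ = (G.neighborSet v).ncard := Nat.card_congr (G.incidenceSetEquivNeighborSet v)
    _ ≤ d := hd v

theorem card_edgeSet_le [Fintype V] (hd : DegreeLE G d) :
    Fintype.card G.edgeSet ≤ d * Fintype.card V := by
  classical
  have covered : (Finset.univ : Finset G.edgeSet) ⊆ Finset.univ.biUnion (incidentEdges G) := by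
    rintro ⟨⟨a, c⟩, h⟩ -
    exact Finset.mem_biUnion.2 ⟨a, Finset.mem_univ a, mem_incidentEdges.2 (Sym2.mem_mk_left a c)⟩
  rw [mul_comm]
  exact (Finset.card_le_card covered).trans
    (Finset.card_biUnion_le_card_mul _ _ _ fun v _ => card_incidentEdges_le hd v)

end IncidentEdges

section Cheeger

variable {V : Type*} {G : SimpleGraph V} {b : ℝ}

theorem CheegerGT.exists_adj_of_two_mul_card_le [Finite V] (hG : CheegerGT G b) (hb : 0 ≤ b)
    {S : Finset V} (hS : S.Nonempty) (half : 2 * S.card ≤ Nat.card V) :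
    ∃ a ∈ S, ∃ c, c ∉ S ∧ G.Adj a c := by
  have cheeger := hG S (by rw [Set.ncard_coe_finset]; exact hS.card_pos)
    (by rwa [Set.ncard_coe_finset])
  have boundary_pos : 0 < edgeBoundaryCard G S := by
    exact_mod_cast (mul_nonneg hb (Nat.cast_nonneg _)).trans_lt cheeger
  obtain ⟨⟨a, c⟩, adj, ha, hc⟩ := Set.nonempty_of_ncard_ne_zero boundary_pos.ne'
  exact ⟨a, ha, c, hc, adj⟩

variable [Fintype V]

theorem CheegerGT.exists_adj_of_ne_univ (hG : CheegerGT G b) (hb : 0 ≤ b) {S : Finset V}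
    (hS : S.Nonempty) (ne_univ : S ≠ Finset.univ) : ∃ a ∈ S, ∃ c, c ∉ S ∧ G.Adj a c := by
  classical
  have split := S.card_add_card_compl
  rcases le_or_gt (2 * S.card) (Nat.card V) with half | half
  · exact hG.exists_adj_of_two_mul_card_le hb hS half
  · rw [Nat.card_eq_fintype_card] at half
    obtain ⟨a, ha, c, hc, adj⟩ := hG.exists_adj_of_two_mul_card_le hb (S := Sᶜ)
      (by rwa [Finset.nonempty_iff_ne_empty, ne_eq, Finset.compl_eq_empty_iff])
      (by rw [Nat.card_eq_fintype_card]; omega)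
    exact ⟨c, by simpa using hc, a, by simpa using ha, adj.symm⟩

theorem CheegerGT.exists_one_le_partialDiff (hG : CheegerGT G b) (hb : 0 ≤ b)
    (card_gt : 1 < Fintype.card V) [Fintype G.edgeSet] {x : G.edgeSet → Bool} {v : V}
    (isolated : ∀ e ∈ incidentEdges G v, x e = false) :
    ∃ e, 1 ≤ partialDiff (realLargestComp G) e x := by
  have : Nonempty V := ⟨v⟩
  obtain ⟨z, hz⟩ := exists_card_cluster_eq_largestComp x
  have ne_univ : cluster G x z ≠ Finset.univ := fun univ => by
    obtain ⟨w, hw⟩ := Fintype.exists_ne_of_one_lt_card card_gt v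
    have all : ∀ u, (percoGraph G x).Reachable z u := fun u =>
      mem_cluster.1 (univ ▸ Finset.mem_univ u)
    obtain ⟨walk⟩ := (all v).symm.trans (all w)
    cases walk with
    | nil => exact hw rfl
    | cons step _ =>
      obtain ⟨adj, is_open⟩ := percoGraph_adj.1 step
      rw [isolated _ (mem_incidentEdges.2 (Sym2.mem_mk_left _ _))] at is_open
      exact Bool.false_ne_true is_open
  obtain ⟨a, ha, c, hc, adj⟩ := hG.exists_adj_of_ne_univ hb ⟨z, mem_cluster_self x z⟩ ne_univ
  exact ⟨_, one_le_partialDiff_of_adj hz ha hc adj⟩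

theorem CheegerGT.pow_le_totalInfluence [Fintype G.edgeSet] (hG : CheegerGT G b) (hb : 0 ≤ b)
    {d : ℕ} (hd : DegreeLE G d) (card_gt : 1 < Fintype.card V) {p : ℝ}
    (hp : p ∈ Set.Icc (0 : ℝ) 1) :
    (1 - p) ^ d ≤ totalInfluence p (realLargestComp G) := by
  classical
  obtain ⟨v⟩ : Nonempty V := Fintype.card_pos_iff.1 (by omega)
  let isolation : G.edgeSet → Bool → ℝ := fun e c =>
    if e ∈ incidentEdges G v then if c then 0 else 1 else 1
  have isolated_prob : expC p (fun x => ∏ e, isolation e (x e)) =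
      (1 - p) ^ (incidentEdges G v).card := by
    rw [expC_prod, ← Finset.prod_const, ← Finset.univ_inter (incidentEdges G v),
      ← Finset.prod_ite_mem]
    refine Finset.prod_congr rfl fun e _ => ?_
    by_cases he : e ∈ incidentEdges G v <;> simp [isolation, he]
  calc (1 - p) ^ d ≤ (1 - p) ^ (incidentEdges G v).card :=
        pow_le_pow_of_le_one (by linarith [hp.2]) (by linarith [hp.1]) (card_incidentEdges_le hd v)
    _ ≤ totalInfluence p (realLargestComp G) := by
      rw [← isolated_prob, totalInfluence, ← expC_sum]
      refine expC_mono hp fun x => ?_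
      have nonneg : ∀ e ∈ Finset.univ, 0 ≤ partialDiff (realLargestComp G) e x := fun e _ =>
        partialDiff_nonneg (monotone_realLargestComp G) e x
      by_cases isolated : ∀ e ∈ incidentEdges G v, x e = false
      · obtain ⟨e, he⟩ := hG.exists_one_le_partialDiff hb card_gt isolated
        refine le_trans (Finset.prod_le_one ?_ ?_)
          (he.trans (Finset.single_le_sum nonneg (Finset.mem_univ e)))
        all_goals
          intro i _
          simp only [isolation]
          split_ifs <;> norm_num
      · push Not at isolated
        obtain ⟨e, he, is_open⟩ := isolated
        simp only [ne_eq, Bool.not_eq_false] at is_open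
        have vanishes : isolation e (x e) = 0 := by simp [isolation, he, is_open]
        exact (Finset.prod_eq_zero (Finset.mem_univ e) vanishes).trans_le (Finset.sum_nonneg nonneg)

end Cheeger

section Expansion

variable {V : Type*} [Fintype V] {G : SimpleGraph V} {b : ℝ} {d : ℕ}

theorem DegreeLE.card_neighborSet_le {V : Type*} {G : SimpleGraph V} (hd : DegreeLE G d) (v : V)
    [Fintype (G.neighborSet v)] : Fintype.card (G.neighborSet v) ≤ d :=
  Fintype.card_eq_nat_card.trans_le (hd v)

open Classical in
/-- The closed neighbourhood `N[S]`: the vertices at graph distance at most one from `S`. Its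
iterates are the balls around `S`. -/
def closedNbhd (G : SimpleGraph V) (S : Finset V) : Finset V :=
  {v | v ∈ S ∨ ∃ u ∈ S, G.Adj u v}

theorem mem_closedNbhd {S : Finset V} {v : V} :
    v ∈ closedNbhd G S ↔ v ∈ S ∨ ∃ u ∈ S, G.Adj u v := by
  simp [closedNbhd]

theorem subset_closedNbhd (G : SimpleGraph V) (S : Finset V) : S ⊆ closedNbhd G S :=
  fun _ h => mem_closedNbhd.2 (Or.inl h)

theorem DegreeLE.edgeBoundaryCard_add_le (hd : DegreeLE G d) (S : Finset V) :
    edgeBoundaryCard G S + d * S.card ≤ d * (closedNbhd G S).card := by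
  classical
  have covered : {q : V × V | G.Adj q.1 q.2 ∧ q.1 ∈ (S : Set V) ∧ q.2 ∉ (S : Set V)} ⊆
      ((closedNbhd G S \ S).biUnion fun v =>
        (G.neighborSet v).toFinset.image fun u => (u, v) : Finset (V × V)) := by
    rintro ⟨a, c⟩ ⟨adj, ha, hc⟩
    simp only [Finset.mem_coe, Finset.mem_biUnion, Finset.mem_sdiff, Finset.mem_image]
    exact ⟨c, ⟨mem_closedNbhd.2 (Or.inr ⟨a, ha, adj⟩), hc⟩, a, by simpa using adj.symm, rfl⟩
  have boundary_le : edgeBoundaryCard G S ≤ (closedNbhd G S \ S).card * d := by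
    refine (Set.ncard_le_ncard covered).trans ?_
    rw [Set.ncard_coe_finset]
    refine Finset.card_biUnion_le_card_mul _ _ _ fun v _ => Finset.card_image_le.trans ?_
    rw [Set.toFinset_card]
    exact hd.card_neighborSet_le v
  calc edgeBoundaryCard G S + d * S.card
      ≤ (closedNbhd G S \ S).card * d + d * S.card := Nat.add_le_add_right boundary_le _
    _ = d * ((closedNbhd G S \ S).card + S.card) := by ring
    _ = d * (closedNbhd G S).card := by
      rw [Finset.card_sdiff_add_card_eq_card (subset_closedNbhd G S)]

theorem CheegerGT.mul_card_le_card_closedNbhd (hG : CheegerGT G b) (hd : DegreeLE G d)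
    {S : Finset V} (half : 2 * S.card ≤ Fintype.card V) :
    (1 + b / d) * S.card ≤ (closedNbhd G S).card := by
  have extensive : (S.card : ℝ) ≤ (closedNbhd G S).card :=
    Nat.cast_le.2 (Finset.card_le_card (subset_closedNbhd G S))
  have boundary : b * S.card + d * S.card ≤ d * (closedNbhd G S).card := by
    rcases S.eq_empty_or_nonempty with rfl | hS
    · simp only [Finset.card_empty, Nat.cast_zero, mul_zero, add_zero]
      positivity
    · have cheeger := hG S (by rw [Set.ncard_coe_finset]; exact hS.card_pos)
        (by rwa [Set.ncard_coe_finset, Nat.card_eq_fintype_card])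
      have edges : (edgeBoundaryCard G S : ℝ) + d * S.card ≤ d * (closedNbhd G S).card := by
        exact_mod_cast hd.edgeBoundaryCard_add_le S
      rw [Set.ncard_coe_finset] at cheeger
      linarith
  have gain : b * S.card / d ≤ (closedNbhd G S).card - S.card :=
    div_le_of_le_mul₀ (Nat.cast_nonneg d) (sub_nonneg.2 extensive) (by linarith)
  linear_combination gain

theorem CheegerGT.mul_card_compl_closedNbhd_le [DecidableEq V] (hG : CheegerGT G b)
    (hd : DegreeLE G d) {S : Finset V} (half : 2 * Sᶜ.card ≤ Fintype.card V) :
    (1 + b / d) * (closedNbhd G S)ᶜ.card ≤ Sᶜ.card := by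
  have outside : (closedNbhd G S)ᶜ.card ≤ Sᶜ.card :=
    Finset.card_le_card (Finset.compl_subset_compl.2 (subset_closedNbhd G S))
  have nbhd_outside : closedNbhd G (closedNbhd G S)ᶜ ⊆ Sᶜ := fun v hv => by
    rw [Finset.mem_compl]
    intro hvS
    rcases mem_closedNbhd.1 hv with h | ⟨u, hu, adj⟩
    · exact Finset.mem_compl.1 h (subset_closedNbhd G S hvS)
    · exact Finset.mem_compl.1 hu (mem_closedNbhd.2 (Or.inr ⟨v, hvS, adj.symm⟩))
  exact (hG.mul_card_le_card_closedNbhd hd (by omega)).trans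
    (Nat.cast_le.2 (Finset.card_le_card nbhd_outside))

theorem CheegerGT.pow_mul_card_le_card_iterate_closedNbhd (hG : CheegerGT G b) (hb : 0 ≤ b)
    (hd : DegreeLE G d) (B : Finset V) (j : ℕ) :
    (1 + b / d) ^ j * B.card ≤ ((closedNbhd G)^[j] B).card ∨
      Fintype.card V < 2 * ((closedNbhd G)^[j] B).card := by
  induction j with
  | zero => simp
  | succ j ih =>
    rw [Function.iterate_succ_apply']
    set S := (closedNbhd G)^[j] B
    have extensive := Finset.card_le_card (subset_closedNbhd G S)
    rcases le_or_gt (2 * S.card) (Fintype.card V) with small | large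
    · left
      calc (1 + b / d) ^ (j + 1) * B.card = (1 + b / d) * ((1 + b / d) ^ j * B.card) := by ring
        _ ≤ (1 + b / d) * S.card := by gcongr; exact ih.resolve_right small.not_gt
        _ ≤ (closedNbhd G S).card := hG.mul_card_le_card_closedNbhd hd small
    · right
      omega

theorem CheegerGT.pow_mul_card_compl_iterate_closedNbhd_le [DecidableEq V] (hG : CheegerGT G b)
    (hb : 0 ≤ b) (hd : DegreeLE G d) {S : Finset V} (half : 2 * Sᶜ.card ≤ Fintype.card V) (j : ℕ) :
    (1 + b / d) ^ j * ((closedNbhd G)^[j] S)ᶜ.card ≤ Sᶜ.card := by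
  induction j generalizing S with
  | zero => simp
  | succ j ih =>
    rw [Function.iterate_succ_apply]
    have outside : (closedNbhd G S)ᶜ.card ≤ Sᶜ.card :=
      Finset.card_le_card (Finset.compl_subset_compl.2 (subset_closedNbhd G S))
    calc (1 + b / d) ^ (j + 1) * ((closedNbhd G)^[j] (closedNbhd G S))ᶜ.card
        = (1 + b / d) * ((1 + b / d) ^ j * ((closedNbhd G)^[j] (closedNbhd G S))ᶜ.card) := by ring
      _ ≤ (1 + b / d) * (closedNbhd G S)ᶜ.card := by gcongr; exact ih (by omega)
      _ ≤ Sᶜ.card := hG.mul_card_compl_closedNbhd_le hd half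

theorem CheegerGT.card_compl_iterate_closedNbhd_le [DecidableEq V] (hG : CheegerGT G b)
    (hb : 0 ≤ b) (hd : DegreeLE G d) {B : Finset V} {r : ℕ}
    (hB : Fintype.card V / (1 + b / d) ^ r ≤ B.card) :
    (((closedNbhd G)^[r + r] B)ᶜ.card : ℝ) ≤ Fintype.card V / (1 + b / d) ^ r / 2 := by
  have pos : 0 < (1 + b / d) ^ r := by positivity
  have more_than_half : 2 * ((closedNbhd G)^[r] B)ᶜ.card ≤ Fintype.card V := by
    have grown : Fintype.card V ≤ 2 * ((closedNbhd G)^[r] B).card := by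
      rcases hG.pow_mul_card_le_card_iterate_closedNbhd hb hd B r with h | h
      · rw [div_le_iff₀' pos] at hB
        have : Fintype.card V ≤ ((closedNbhd G)^[r] B).card := Nat.cast_le.1 (hB.trans h)
        omega
      · exact h.le
    have := ((closedNbhd G)^[r] B).card_add_card_compl
    omega
  have decay := hG.pow_mul_card_compl_iterate_closedNbhd_le hb hd more_than_half r
  rw [← Function.iterate_add_apply] at decay
  have half : 2 * (((closedNbhd G)^[r] B)ᶜ.card : ℝ) ≤ Fintype.card V := by
    exact_mod_cast more_than_half
  rw [div_right_comm, le_div_iff₀' pos]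
  linarith

end Expansion

section Walk

variable {V : Type*} [Fintype V] {G : SimpleGraph V} {d : ℕ} {p : ℝ}

open Classical in
/-- The sum of `g` over the positions reached from `(x, v)` by one step to a neighbour of `v`, the
edge walked along being opened. -/
def walkStep (g : (G.edgeSet → Bool) → V → ℝ) (x : G.edgeSet → Bool) (v : V) : ℝ :=
  ∑ w : G.neighborSet v, g (setEdge x ⟨s(v, w), w.2⟩ true) w

theorem sum_sum_neighborSet [∀ v, Fintype (G.neighborSet v)] (g : V → ℝ) :
    ∑ v, ∑ w : G.neighborSet v, g w = ∑ w, Fintype.card (G.neighborSet w) * g w := by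
  simp only [Finset.sum_set_coe (G.neighborSet _) (f := g)]
  rw [Finset.sum_comm' (t' := Finset.univ) (s' := fun w => (G.neighborSet w).toFinset)
    (by simp [SimpleGraph.adj_comm])]
  simp

theorem sum_expC_walkStep_le (hd : DegreeLE G d) (hp : p ∈ Set.Ioc (0 : ℝ) 1)
    {g : (G.edgeSet → Bool) → V → ℝ} (hg : 0 ≤ g) :
    ∑ v, expC p (fun x => walkStep g x v) ≤ d / p * ∑ v, expC p (fun x => g x v) := by
  classical
  have mean_nonneg : ∀ w, 0 ≤ expC p (fun x => g x w) := fun w =>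
    expC_nonneg ⟨hp.1.le, hp.2⟩ fun x => hg x w
  calc ∑ v, expC p (fun x => walkStep g x v)
      = ∑ v, ∑ w : G.neighborSet v, expC p (fun x => g (setEdge x ⟨s(v, w), w.2⟩ true) w) :=
        Finset.sum_congr rfl fun v _ => expC_sum ..
    _ ≤ ∑ v, ∑ w : G.neighborSet v, 1 / p * expC p (fun x => g x w) :=
        Finset.sum_le_sum fun v _ => Finset.sum_le_sum fun w _ =>
          expC_comp_setEdge_true_le hp (fun x => hg x w) _
    _ = ∑ w, Fintype.card (G.neighborSet w) * (1 / p * expC p (fun x => g x w)) :=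
        sum_sum_neighborSet fun w => 1 / p * expC p (fun x => g x w)
    _ ≤ ∑ w, d * (1 / p * expC p (fun x => g x w)) := by
        gcongr with w
        · exact mul_nonneg (one_div_nonneg.2 hp.1.le) (mean_nonneg w)
        · exact hd.card_neighborSet_le w
    _ = d / p * ∑ v, expC p (fun x => g x v) := by
        rw [Finset.mul_sum]
        exact Finset.sum_congr rfl fun w _ => by ring

variable [Fintype G.edgeSet] {f : (G.edgeSet → Bool) → ℝ}

/-- The total gain of `f` from opening an edge at `v`. It bounds the increment of `f` along the
first step of any walk from `v` whose edges are opened one after the other. -/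
def stepGain (f : (G.edgeSet → Bool) → ℝ) (x : G.edgeSet → Bool) (v : V) : ℝ :=
  ∑ e ∈ incidentEdges G v, partialDiff f e x

/-- The sum, over all walks of length `j` from `v` whose edges are opened one after the other, of
the gain `stepGain` at their end. -/
def walkGain (f : (G.edgeSet → Bool) → ℝ) (j : ℕ) : (G.edgeSet → Bool) → V → ℝ :=
  walkStep^[j] (stepGain f)

theorem walkGain_succ (f : (G.edgeSet → Bool) → ℝ) (j : ℕ) :
    walkGain f (j + 1) = walkStep (walkGain f j) :=
  Function.iterate_succ_apply' _ _ _

theorem walkGain_nonneg (hf : Monotone f) (j : ℕ) : 0 ≤ walkGain f j := by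
  induction j with
  | zero => exact fun x v => Finset.sum_nonneg fun e _ => partialDiff_nonneg hf e x
  | succ j ih =>
    rw [walkGain_succ]
    exact fun x v => Finset.sum_nonneg fun w _ => ih _ _

theorem sum_expC_walkGain_le (hd : DegreeLE G d) (hp : p ∈ Set.Ioc (0 : ℝ) 1) (hf : Monotone f)
    (j : ℕ) : ∑ v, expC p (fun x => walkGain f j x v) ≤ (d / p) ^ j * (2 * totalInfluence p f) := by
  induction j with
  | zero =>
    simp only [walkGain, Function.iterate_zero, id, stepGain, expC_sum, pow_zero, one_mul]
    exact (sum_sum_incidentEdges _).le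
  | succ j ih =>
    rw [walkGain_succ, pow_succ', mul_assoc]
    have := hp.1
    exact (sum_expC_walkStep_le hd hp (walkGain_nonneg hf j)).trans (by gcongr)

theorem exists_sub_le_sum_walkGain (hf : Monotone f) {B : Finset V} (r : ℕ)
    (x : G.edgeSet → Bool) {v : V} (hv : v ∈ (closedNbhd G)^[r] B) :
    ∃ y, x ≤ y ∧ (∃ w ∈ B, w ∈ cluster G y v) ∧
      f y - f x ≤ ∑ j ∈ Finset.range r, walkGain f j x v := by
  classical
  induction r generalizing x v with
  | zero => exact ⟨x, le_rfl, ⟨v, hv, mem_cluster_self x v⟩, by simp⟩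
  | succ r ih =>
    rw [Function.iterate_succ_apply'] at hv
    rcases mem_closedNbhd.1 hv with hv | ⟨w, hw, adj⟩
    · obtain ⟨y, hxy, meets, gain⟩ := ih x hv
      refine ⟨y, hxy, meets, gain.trans ?_⟩
      rw [Finset.sum_range_succ]
      exact le_add_of_nonneg_right (walkGain_nonneg hf r x v)
    · let e : G.edgeSet := ⟨s(v, w), adj.symm⟩
      obtain ⟨y, hxy, ⟨u, hu, reach⟩, gain⟩ := ih (setEdge x e true) hw
      have step_open : (percoGraph G y).Adj v w := percoGraph_adj.2
        ⟨adj.symm, Bool.le_iff_imp.1 (hxy e) (setEdge_apply_self x e true)⟩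
      refine ⟨y, (le_setEdge_true x e).trans hxy,
        ⟨u, hu, mem_cluster.2 (step_open.reachable.trans (mem_cluster.1 reach))⟩, ?_⟩
      have first_step : f (setEdge x e true) - f x ≤ walkGain f 0 x v :=
        (sub_le_partialDiff hf e x).trans <| Finset.single_le_sum
          (f := fun e => partialDiff f e x) (fun e _ => partialDiff_nonneg hf e x)
          (mem_incidentEdges.2 (Sym2.mem_mk_left v w))
      have later_steps : ∀ j, walkGain f j (setEdge x e true) w ≤ walkGain f (j + 1) x v :=
        fun j => by
          rw [walkGain_succ]
          exact Finset.single_le_sum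
            (f := fun w : G.neighborSet v => walkGain f j (setEdge x ⟨s(v, w), w.2⟩ true) w)
            (fun w _ => walkGain_nonneg hf j _ _) (Finset.mem_univ ⟨w, adj.symm⟩)
      rw [Finset.sum_range_succ']
      linarith [Finset.sum_le_sum fun j (_ : j ∈ Finset.range r) => later_steps j]

end Walk

section Bottleneck

variable {V : Type*} [Fintype V] {G : SimpleGraph V} [Fintype G.edgeSet] {b : ℝ} {d r : ℕ}
  {k : ℝ}

theorem sub_le_sum_walkGain {x : G.edgeSet → Bool} {u v a : V} (separate : v ∉ cluster G x u)
    (ha : a ∈ cluster G x u) (near : a ∈ (closedNbhd G)^[r] (cluster G x v)) :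
    (cluster G x u).card + (cluster G x v).card - realLargestComp G x ≤
      ∑ j ∈ Finset.range r, walkGain (realLargestComp G) j x a := by
  classical
  obtain ⟨y, hxy, ⟨w, hw, reach⟩, gain⟩ :=
    exists_sub_le_sum_walkGain (monotone_realLargestComp G) r x near
  have merged : cluster G x u ∪ cluster G x v ⊆ cluster G y a := by
    rw [← cluster_eq_of_mem ha, ← cluster_eq_of_mem hw]
    exact Finset.union_subset (cluster_mono hxy a)
      (cluster_eq_of_mem reach ▸ cluster_mono hxy w)
  have large := (Finset.card_le_card merged).trans (card_cluster_le_largestComp y a)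
  rw [Finset.card_union_of_disjoint (disjoint_cluster separate)] at large
  have large' := Nat.cast_le (α := ℝ).2 large
  push_cast at large'
  exact (sub_le_sub_right large' _).trans gain

theorem CheegerGT.mul_le_sum_walkGain (hG : CheegerGT G b) (hb : 0 ≤ b) (hd : DegreeLE G d)
    (hk : 0 < k) (hkr : Fintype.card V / (1 + b / d) ^ r ≤ k) {x : G.edgeSet → Bool}
    (hx : (bigDiffs (realLargestComp G) k x).Nonempty) :
    k / 2 * k ≤ ∑ j ∈ Finset.range (r + r), ∑ v, walkGain (realLargestComp G) j x v := by
  classical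
  obtain ⟨⟨⟨u, v⟩, adj⟩, he⟩ := hx
  obtain ⟨separate, le_sum⟩ := add_le_card_cluster_of_mem_bigDiffs hk he
  obtain ⟨-, hu, hv⟩ := le_card_cluster_of_mem_bigDiffs hk he
  set ball := (closedNbhd G)^[r + r] (cluster G x v)
  have far : (ballᶜ.card : ℝ) ≤ k / 2 :=
    (hG.card_compl_iterate_closedNbhd_le hb hd (hkr.trans hv)).trans (by gcongr)
  have near : k / 2 ≤ (cluster G x u ∩ ball).card := by
    have split : (cluster G x u).card ≤ (cluster G x u ∩ ball).card + ballᶜ.card := by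
      rw [← Finset.card_inter_add_card_sdiff (cluster G x u) ball]
      gcongr
      rw [Finset.sdiff_eq_inter_compl]
      exact Finset.inter_subset_right
    have := Nat.cast_le (α := ℝ).2 split
    push_cast at this
    linarith
  have gain_nonneg : ∀ a, 0 ≤ ∑ j ∈ Finset.range (r + r), walkGain (realLargestComp G) j x a :=
    fun a => Finset.sum_nonneg fun j _ => walkGain_nonneg (monotone_realLargestComp G) j x a
  rw [Finset.sum_comm]
  calc k / 2 * k ≤ (cluster G x u ∩ ball).card * k := by gcongr
    _ ≤ ∑ a ∈ cluster G x u ∩ ball,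
          ∑ j ∈ Finset.range (r + r), walkGain (realLargestComp G) j x a := by
        rw [← nsmul_eq_mul]
        refine Finset.card_nsmul_le_sum _ _ _ fun a ha => le_trans ?_ <|
          sub_le_sum_walkGain separate (Finset.mem_inter.1 ha).1 (Finset.mem_inter.1 ha).2
        linarith
    _ ≤ ∑ a, ∑ j ∈ Finset.range (r + r), walkGain (realLargestComp G) j x a :=
        Finset.sum_le_univ_sum_of_nonneg gain_nonneg

theorem CheegerGT.probC_bigDiffs_nonempty_mul_sq_le (hG : CheegerGT G b) (hb : 0 ≤ b)
    (hd : DegreeLE G d) (hk : 0 < k) (hkr : Fintype.card V / (1 + b / d) ^ r ≤ k) {p D : ℝ}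
    (hp : p ∈ Set.Ioc (0 : ℝ) 1) (hD : 1 ≤ D) (hdp : d / p ≤ D) :
    probC p {x | (bigDiffs (realLargestComp G) k x).Nonempty} * k ^ 2 ≤
      8 * r * D ^ (r + r) * totalInfluence p (realLargestComp G) := by
  have mono := monotone_realLargestComp G
  have infl_nonneg := totalInfluence_nonneg (Set.Ioc_subset_Icc_self hp) mono
  have markov := probC_mul_le_expC (Set.Ioc_subset_Icc_self hp)
    (A := {x | (bigDiffs (realLargestComp G) k x).Nonempty})
    (fun x => Finset.sum_nonneg fun j _ => Finset.sum_nonneg fun v _ => walkGain_nonneg mono j x v)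
    fun x hx => hG.mul_le_sum_walkGain hb hd hk hkr hx
  have walks : ∀ j ∈ Finset.range (r + r), ∑ v, expC p (fun x => walkGain (realLargestComp G) j x v)
      ≤ D ^ (r + r) * (2 * totalInfluence p (realLargestComp G)) := fun j hj =>
    (sum_expC_walkGain_le hd hp mono j).trans <| by
      gcongr
      have := hp.1
      exact (pow_le_pow_left₀ (by positivity) hdp j).trans
        (pow_le_pow_right₀ hD (Finset.mem_range.1 hj).le)
  simp only [expC_sum] at markov
  have total := markov.trans (Finset.sum_le_card_nsmul _ _ _ walks)
  rw [Finset.card_range, nsmul_eq_mul] at total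
  push_cast at total
  linear_combination 2 * total

end Bottleneck

section Exploration

variable {V : Type*} [Fintype V] {G : SimpleGraph V} {x y : G.edgeSet → Bool} {d : ℕ}

theorem cluster_subset_of_agree {u : V}
    (agree : ∀ e : G.edgeSet, (∃ a ∈ (e : Sym2 V), a ∈ cluster G x u) → y e = x e) :
    cluster G y u ⊆ cluster G x u := by
  intro w hw
  have path := (SimpleGraph.reachable_iff_reflTransGen _ _).1 (mem_cluster.1 hw)
  clear hw
  induction path with
  | refl => exact mem_cluster_self x u
  | tail _ step ih =>
    obtain ⟨adj, is_open⟩ := percoGraph_adj.1 step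
    rw [agree _ ⟨_, Sym2.mem_mk_left _ _, ih⟩] at is_open
    exact mem_cluster.2 ((mem_cluster.1 ih).trans (percoGraph_adj.2 ⟨adj, is_open⟩).reachable)

theorem cluster_eq_of_agree {u : V}
    (agree : ∀ e : G.edgeSet, (∃ a ∈ (e : Sym2 V), a ∈ cluster G x u) → y e = x e) :
    cluster G y u = cluster G x u :=
  have le := cluster_subset_of_agree agree
  le.antisymm <| cluster_subset_of_agree fun e ⟨a, hae, ha⟩ => (agree e ⟨a, hae, le ha⟩).symm

variable [Fintype G.edgeSet]

open Classical in
/-- The edges revealed by exploring the clusters of the vertices in `U`: those with an endpoint in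
one of these clusters. -/
def exploredEdges (G : SimpleGraph V) [Fintype G.edgeSet] (U : Set V) (x : G.edgeSet → Bool) :
    Finset G.edgeSet :=
  {e | ∃ u ∈ U, ∃ a ∈ (e : Sym2 V), a ∈ cluster G x u}

theorem mem_exploredEdges {U : Set V} {e : G.edgeSet} :
    e ∈ exploredEdges G U x ↔ ∃ u ∈ U, ∃ a ∈ (e : Sym2 V), a ∈ cluster G x u := by
  simp [exploredEdges]

theorem isStoppingSet_exploredEdges (G : SimpleGraph V) [Fintype G.edgeSet] (U : Set V) :
    IsStoppingSet (exploredEdges G U) := by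
  intro x y agree
  have same_cluster : ∀ u ∈ U, cluster G y u = cluster G x u := fun u hu =>
    cluster_eq_of_agree fun e touches => agree e (mem_exploredEdges.2 ⟨u, hu, touches⟩)
  ext e
  simp only [mem_exploredEdges]
  exact exists_congr fun u => and_congr_right fun hu => by rw [same_cluster u hu]

theorem exploredEdges_union [DecidableEq G.edgeSet] (U W : Set V) :
    exploredEdges G (U ∪ W) x = exploredEdges G U x ∪ exploredEdges G W x := by
  ext e
  simp only [mem_exploredEdges, Finset.mem_union, Set.mem_union, or_and_right, exists_or]

theorem eq_false_of_mem_exploredEdges {u v : V} (separate : v ∉ cluster G x u) {e : G.edgeSet}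
    (hu : e ∈ exploredEdges G {u} x) (hv : e ∈ exploredEdges G {v} x) : x e = false := by
  simp only [mem_exploredEdges, Set.mem_singleton_iff, exists_eq_left] at hu hv
  obtain ⟨a, hae, ha⟩ := hu
  obtain ⟨c, hce, hc⟩ := hv
  have disjoint := Finset.disjoint_left.1 (disjoint_cluster separate)
  have ne : a ≠ c := by
    rintro rfl
    exact disjoint ha hc
  have ends : (e : Sym2 V) = s(a, c) := (Sym2.mem_and_mem_iff ne).1 ⟨hae, hce⟩
  obtain ⟨_, adj⟩ := e
  subst ends
  by_contra is_open
  have reach := (percoGraph_adj.2 ⟨adj, by simpa using is_open⟩).reachable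
  exact disjoint (mem_cluster.2 ((mem_cluster.1 ha).trans reach)) hc

theorem mul_card_exploredEdges_inter [DecidableEq G.edgeSet] (p : ℝ) {u v : V}
    (separate : v ∉ cluster G x u) :
    p * (exploredEdges G {u} x ∩ exploredEdges G {v} x).card =
      centeredSum p (exploredEdges G {u, v} x) x -
        centeredSum p (exploredEdges G {u} x) x - centeredSum p (exploredEdges G {v} x) x := by
  have shared : centeredSum p (exploredEdges G {u} x ∩ exploredEdges G {v} x) x =
      -(p * (exploredEdges G {u} x ∩ exploredEdges G {v} x).card) := by
    rw [centeredSum, Finset.sum_congr rfl fun e he => by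
      obtain ⟨hu, hv⟩ := Finset.mem_inter.1 he
      rw [eq_false_of_mem_exploredEdges separate hu hv]]
    simp [mul_comm]
  have inclusion_exclusion :
      centeredSum p (exploredEdges G {u} x ∪ exploredEdges G {v} x) x +
          centeredSum p (exploredEdges G {u} x ∩ exploredEdges G {v} x) x =
        centeredSum p (exploredEdges G {u} x) x + centeredSum p (exploredEdges G {v} x) x :=
    Finset.sum_union_inter
  rw [Set.insert_eq, exploredEdges_union]
  linarith

/-- In every exploration of the clusters of two vertices, the number of open edges deviates by less
than `t` from `p` times the number of revealed edges. -/
def IsBalanced (G : SimpleGraph V) [Fintype G.edgeSet] (p t : ℝ) (x : G.edgeSet → Bool) : Prop :=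
  ∀ u v, |centeredSum p (exploredEdges G {u, v} x) x| < t

theorem IsBalanced.abs_centeredSum_singleton_lt {p t : ℝ} (h : IsBalanced G p t x) (u : V) :
    |centeredSum p (exploredEdges G {u} x) x| < t := by
  simpa only [Set.pair_eq_singleton] using h u u

theorem IsBalanced.card_exploredEdges_inter_le [DecidableEq G.edgeSet] {p t : ℝ}
    (h : IsBalanced G p t x) (hp : 0 < p) {u v : V} (separate : v ∉ cluster G x u) :
    ((exploredEdges G {u} x ∩ exploredEdges G {v} x).card : ℝ) ≤ 3 * t / p := by
  rw [le_div_iff₀' hp, mul_card_exploredEdges_inter p separate]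
  linarith [(abs_lt.1 (h u v)).2, (abs_lt.1 (h.abs_centeredSum_singleton_lt u)).1,
    (abs_lt.1 (h.abs_centeredSum_singleton_lt v)).1]

-- Double counting of the triples `(e, w, z)` where `e` joins the distinct clusters of `w` and `z`.
theorem IsBalanced.card_bigDiffs_mul_le {p t k : ℝ} (h : IsBalanced G p t x) (hp : 0 < p)
    (hk : 0 < k) :
    (bigDiffs (realLargestComp G) k x).card * k ^ 2 ≤ Fintype.card V ^ 2 * (3 * t / p) := by
  classical
  let joins : G.edgeSet → V × V → Prop := fun e z =>
    z.2 ∉ cluster G x z.1 ∧ e ∈ exploredEdges G {z.1} x ∩ exploredEdges G {z.2} x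
  have count := Finset.card_nsmul_le_card_nsmul (s := bigDiffs (realLargestComp G) k x)
    (t := Finset.univ) joins (m := k ^ 2) (n := 3 * t / p) ?_ ?_
  · simpa [nsmul_eq_mul, ← sq] using count
  · rintro ⟨⟨u, v⟩, adj⟩ he
    obtain ⟨separate, hu, hv⟩ := le_card_cluster_of_mem_bigDiffs hk he
    have pairs : cluster G x u ×ˢ cluster G x v ⊆
        Finset.univ.bipartiteAbove joins ⟨s(u, v), adj⟩ := by
      rintro ⟨w, z⟩ hwz
      obtain ⟨hw, hz⟩ := Finset.mem_product.1 hwz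
      simp only [Finset.bipartiteAbove, Finset.mem_filter, Finset.mem_univ, true_and, joins,
        Finset.mem_inter, mem_exploredEdges, Set.mem_singleton_iff, exists_eq_left]
      rw [cluster_eq_of_mem hw, cluster_eq_of_mem hz]
      exact ⟨Finset.disjoint_right.1 (disjoint_cluster separate) hz,
        ⟨u, Sym2.mem_mk_left u v, mem_cluster_self x u⟩,
        ⟨v, Sym2.mem_mk_right u v, mem_cluster_self x v⟩⟩
    calc k ^ 2 ≤ (cluster G x u).card * (cluster G x v).card := by rw [sq]; gcongr
      _ = ((cluster G x u ×ˢ cluster G x v).card : ℝ) := by rw [Finset.card_product, Nat.cast_mul]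
      _ ≤ _ := Nat.cast_le.2 (Finset.card_le_card pairs)
  · rintro ⟨u, v⟩ -
    by_cases separate : v ∈ cluster G x u
    · have t_nonneg : 0 ≤ t := (abs_nonneg _).trans (h u v).le
      simp only [Finset.bipartiteBelow, joins, separate, not_true_eq_false, false_and,
        Finset.filter_false, Finset.card_empty, Nat.cast_zero]
      positivity
    · refine le_trans (Nat.cast_le.2 (Finset.card_le_card fun e he => ?_))
        (h.card_exploredEdges_inter_le hp separate)
      exact (Finset.mem_filter.1 he).2.2

theorem card_exploredEdges_singleton_le (hd : DegreeLE G d) (u : V) :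
    (exploredEdges G {u} x).card ≤ d * (cluster G x u).card := by
  classical
  have covered : exploredEdges G {u} x ⊆ (cluster G x u).biUnion (incidentEdges G) := fun e he => by
    simp only [mem_exploredEdges, Set.mem_singleton_iff, exists_eq_left] at he
    obtain ⟨a, hae, ha⟩ := he
    exact Finset.mem_biUnion.2 ⟨a, ha, mem_incidentEdges.2 hae⟩
  rw [mul_comm]
  exact (Finset.card_le_card covered).trans
    (Finset.card_biUnion_le_card_mul _ _ _ fun a _ => card_incidentEdges_le hd a)

theorem card_cluster_le_two_mul {u : V} (hu : 1 < (cluster G x u).card) :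
    (cluster G x u).card ≤ 2 * ((exploredEdges G {u} x).filter fun e => x e = true).card := by
  classical
  set openEdges := (exploredEdges G {u} x).filter fun e => x e = true
  have covered : cluster G x u ⊆ openEdges.biUnion fun e => (e : Sym2 V).toFinset := by
    intro a ha
    obtain ⟨c, hc, hca⟩ := Finset.exists_mem_ne hu a
    obtain ⟨walk⟩ := (mem_cluster.1 ha).symm.trans (mem_cluster.1 hc)
    cases walk with
    | nil => exact absurd rfl hca
    | cons step _ =>
      obtain ⟨adj, is_open⟩ := percoGraph_adj.1 step
      refine Finset.mem_biUnion.2 ⟨⟨_, adj⟩, Finset.mem_filter.2 ⟨?_, is_open⟩, ?_⟩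
      · exact mem_exploredEdges.2 ⟨u, rfl, a, Sym2.mem_mk_left a _, ha⟩
      · exact Sym2.mem_toFinset.2 (Sym2.mem_mk_left a _)
  rw [mul_comm]
  refine (Finset.card_le_card covered).trans (Finset.card_biUnion_le_card_mul _ _ _ fun e _ => ?_)
  rw [Sym2.card_toFinset_of_not_isDiag _ (G.not_isDiag_of_mem_edgeSet e.2)]

-- When `4dp ≤ 1`, the surroundings of a large cluster contain far more open edges than expected.
theorem IsBalanced.bigDiffs_eq_empty {p t k : ℝ} (h : IsBalanced G p t x) (hd : DegreeLE G d)
    (hp : 0 ≤ p) (hdp : 4 * d * p ≤ 1) (hk : 1 < k) (htk : 4 * t ≤ k) :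
    bigDiffs (realLargestComp G) k x = ∅ := by
  refine Finset.eq_empty_of_forall_notMem fun e he => ?_
  obtain ⟨⟨u, v⟩, adj⟩ := e
  obtain ⟨-, hu, -⟩ := le_card_cluster_of_mem_bigDiffs (by linarith) he
  have open_many := card_cluster_le_two_mul (Nat.one_lt_cast.1 (hk.trans_le hu))
  have explored_few := card_exploredEdges_singleton_le (x := x) hd u
  set openEdges := (exploredEdges G {u} x).filter fun e => x e = true with openEdges_def
  have deviation : centeredSum p (exploredEdges G {u} x) x =
      openEdges.card - (exploredEdges G {u} x).card * p := by
    simp [centeredSum, openEdges_def]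
  have open_many' : ((cluster G x u).card : ℝ) ≤ 2 * openEdges.card := by exact_mod_cast open_many
  have expected_few : (exploredEdges G {u} x).card * p ≤ (cluster G x u).card / 4 := by
    calc (exploredEdges G {u} x).card * p ≤ (d * (cluster G x u).card) * p := by
          gcongr; exact_mod_cast explored_few
      _ = (4 * d * p) * ((cluster G x u).card / 4) := by ring
      _ ≤ (cluster G x u).card / 4 := mul_le_of_le_one_left (by positivity) hdp
  linarith [(abs_lt.1 (h.abs_centeredSum_singleton_lt u)).2]

theorem probC_not_isBalanced_le [Nonempty V] (hd : DegreeLE G d) {p : ℝ}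
    (hp : p ∈ Set.Icc (0 : ℝ) 1) (t : ℝ) :
    probC p {x | ¬ IsBalanced G p t x} ≤
      2 * Fintype.card V ^ 2 * Real.exp (d - t / √(Fintype.card V)) := by
  have card_pos : (1 : ℝ) ≤ Fintype.card V := Nat.one_le_cast.2 Fintype.card_pos
  have exponent : (1 / √(Fintype.card V)) ^ 2 * (Fintype.card G.edgeSet : ℝ) -
      1 / √(Fintype.card V) * t ≤ d - t / √(Fintype.card V) := by
    have edges : (Fintype.card G.edgeSet : ℝ) ≤ d * Fintype.card V := by
      exact_mod_cast card_edgeSet_le hd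
    rw [div_pow, one_pow, Real.sq_sqrt (by positivity), one_div_mul_eq_div, one_div_mul_eq_div]
    gcongr
    rwa [div_le_iff₀ (by positivity)]
  have scale : 1 / √(Fintype.card V) ∈ Set.Icc (0 : ℝ) 1 :=
    ⟨by positivity, (div_le_one (by positivity)).2 (Real.one_le_sqrt.2 card_pos)⟩
  calc probC p {x | ¬ IsBalanced G p t x}
      ≤ probC p (⋃ z : V × V, {x | t ≤ |centeredSum p (exploredEdges G {z.1, z.2} x) x|}) :=
        probC_mono hp fun x hx => by
          simp only [Set.mem_ofPred_eq, IsBalanced, not_forall, not_lt] at hx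
          obtain ⟨u, v, hx⟩ := hx
          exact Set.mem_iUnion.2 ⟨(u, v), hx⟩
    _ ≤ ∑ z : V × V, probC p {x | t ≤ |centeredSum p (exploredEdges G {z.1, z.2} x) x|} :=
        probC_iUnion_le hp _
    _ ≤ ∑ _z : V × V, 2 * Real.exp (d - t / √(Fintype.card V)) :=
        Finset.sum_le_sum fun z _ =>
          ((isStoppingSet_exploredEdges G {z.1, z.2}).probC_abs_centeredSum_ge_le hp scale t).trans
            (by gcongr)
    _ = 2 * Fintype.card V ^ 2 * Real.exp (d - t / √(Fintype.card V)) := by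
        simp only [Finset.sum_const, Finset.card_univ, Fintype.card_prod, nsmul_eq_mul]
        push_cast
        ring

end Exploration

section Regimes

variable {V : Type*} {G : SimpleGraph V} [Fintype G.edgeSet] {b : ℝ} {d : ℕ} {k p : ℝ}

theorem edgeBoundaryCard_cluster_le [Fintype V] (x : G.edgeSet → Bool) (u : V) :
    edgeBoundaryCard G (cluster G x u : Set V) ≤
      (Finset.univ.filter fun e => x e = false).card := by
  classical
  rw [edgeBoundaryCard, ← Finset.card_map (Function.Embedding.subtype _), ← Set.ncard_coe_finset]
  refine Set.ncard_le_ncard_of_injOn (fun q => s(q.1, q.2)) ?_ ?_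
  · rintro ⟨a, c⟩ ⟨adj, ha, hc⟩
    have closed : x ⟨s(a, c), adj⟩ = false := by
      by_contra is_open
      have reach := (percoGraph_adj.2 ⟨adj, by simpa using is_open⟩).reachable
      exact hc (mem_cluster.2 ((mem_cluster.1 ha).trans reach))
    exact Finset.mem_map.2 ⟨⟨s(a, c), adj⟩, by simpa using closed, rfl⟩
  · rintro ⟨a, c⟩ ⟨-, ha, -⟩ ⟨a', c'⟩ ⟨-, -, hc'⟩ same_edge
    rcases Sym2.eq_iff.1 same_edge with ⟨rfl, rfl⟩ | ⟨rfl, rfl⟩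
    · rfl
    · exact absurd ha hc'

theorem CheegerGT.mul_le_card_closed [Finite V] (hG : CheegerGT G b) (hb : 0 ≤ b) (hk : 0 < k)
    {x : G.edgeSet → Bool} (hx : (bigDiffs (realLargestComp G) k x).Nonempty) :
    b * k ≤ (Finset.univ.filter fun e => x e = false).card := by
  classical
  have := Fintype.ofFinite V
  obtain ⟨⟨⟨u, v⟩, adj⟩, he⟩ := hx
  obtain ⟨separate, hu, hv⟩ := le_card_cluster_of_mem_bigDiffs hk he
  have fit : (cluster G x u).card + (cluster G x v).card ≤ Fintype.card V := by
    rw [← Finset.card_union_of_disjoint (disjoint_cluster separate)]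
    exact Finset.card_le_univ _
  obtain ⟨w, hw, half⟩ : ∃ w, k ≤ (cluster G x w).card ∧
      2 * (cluster G x w).card ≤ Fintype.card V := by
    rcases le_total (cluster G x u).card (cluster G x v).card with le | le
    · exact ⟨u, hu, by lia⟩
    · exact ⟨v, hv, by lia⟩
  have cheeger := hG (cluster G x w)
    (by rw [Set.ncard_coe_finset]; exact Finset.card_pos.2 ⟨w, mem_cluster_self x w⟩)
    (by rwa [Set.ncard_coe_finset, Nat.card_eq_fintype_card])
  rw [Set.ncard_coe_finset] at cheeger
  calc b * k ≤ b * (cluster G x w).card := by gcongr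
    _ ≤ edgeBoundaryCard G (cluster G x w : Set V) := cheeger.le
    _ ≤ _ := Nat.cast_le.2 (edgeBoundaryCard_cluster_le x w)

variable [Fintype V]

theorem CheegerGT.probC_bigDiffs_nonempty_le (hG : CheegerGT G b) (hb : 0 ≤ b)
    (hd : DegreeLE G d) (hk : 0 < k) {m : ℕ} (hm : m ≤ b * k) [Nonempty V]
    (hp : p ∈ Set.Ico (0 : ℝ) 1) (hpV : (1 - p) * Fintype.card V ≤ 1) :
    probC p {x | (bigDiffs (realLargestComp G) k x).Nonempty} ≤
      ((1 - p) * Fintype.card V) ^ m * Real.exp d := by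
  have q_pos : 0 < 1 - p := sub_pos.2 hp.2
  have card_pos : (0 : ℝ) < Fintype.card V := Nat.cast_pos.2 Fintype.card_pos
  have edges : (Fintype.card G.edgeSet : ℝ) ≤ d * Fintype.card V := by
    exact_mod_cast card_edgeSet_le hd
  have exponent :
      Fintype.card G.edgeSet * ((1 - p) / ((1 - p) * Fintype.card V)) ≤ (d : ℝ) := by
    rwa [div_mul_cancel_left₀ q_pos.ne', ← div_eq_mul_inv, div_le_iff₀ card_pos]
  have many_closed : {x | (bigDiffs (realLargestComp G) k x).Nonempty} ⊆
      {x | m ≤ (Finset.univ.filter fun e => x e = false).card} := fun x hx =>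
    Nat.cast_le.1 (hm.trans (hG.mul_le_card_closed hb hk hx))
  calc _ ≤ _ := probC_mono (Set.Ico_subset_Icc_self hp) many_closed
    _ ≤ _ := probC_le_card_closed_le (Set.Ico_subset_Icc_self hp) ⟨mul_pos q_pos card_pos, hpV⟩ m
    _ ≤ _ := by gcongr

theorem CheegerGT.expC_card_bigDiffs_le_of_high (hG : CheegerGT G b) (hb : 0 ≤ b)
    (hd : DegreeLE G d) (hV : 1 < Fintype.card V) (hk : 0 < k) (hbk : 2 * d + 3 ≤ b * k)
    (hp : p ∈ Set.Ico (0 : ℝ) 1) (hpV : (1 - p) * Fintype.card V ^ 2 ≤ 1) :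
    Fintype.card V ^ 2 * expC p (fun x => ((bigDiffs (realLargestComp G) k x).card : ℝ)) ≤
      d * Real.exp d * totalInfluence p (realLargestComp G) := by
  have hp' := Set.Ico_subset_Icc_self hp
  have : Nonempty V := Fintype.card_pos_iff.1 (by lia)
  have edges : (Fintype.card G.edgeSet : ℝ) ≤ d * Fintype.card V := by
    exact_mod_cast card_edgeSet_le hd
  set n := (Fintype.card V : ℝ) with n_def
  have n_ge : 1 ≤ n := Nat.one_le_cast.2 hV.le
  have q_nonneg : 0 ≤ 1 - p := sub_nonneg.2 hp'.2
  have rare := hG.probC_bigDiffs_nonempty_le (m := 2 * d + 3) hb hd hk (by exact_mod_cast hbk) hp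
    (le_trans (by rw [← n_def]; gcongr; exact le_self_pow₀ n_ge two_ne_zero) hpV)
  have count := expC_card_bigDiffs_le (f := realLargestComp G) (k := k) hp'
    (Nat.cast_nonneg (Fintype.card G.edgeSet)) (A := Set.univ)
    fun x _ => Nat.cast_le.2 (Finset.card_le_univ _)
  simp only [Set.compl_univ, probC_eq_expC_indicator p ∅, Set.indicator_empty, expC_const, mul_zero,
    add_zero] at count
  calc n ^ 2 * expC p (fun x => ((bigDiffs (realLargestComp G) k x).card : ℝ))
      ≤ n ^ 2 * ((d * n) * (((1 - p) * n) ^ (2 * d + 3) * Real.exp d)) := by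
        have := probC_nonneg hp' {x | (bigDiffs (realLargestComp G) k x).Nonempty}
        gcongr
        exact count.trans (by gcongr)
    _ = d * Real.exp d * (((1 - p) * n ^ 2) ^ (d + 3) * (1 - p) ^ d) := by
        generalize 1 - p = q
        ring
    _ ≤ d * Real.exp d * (1 * totalInfluence p (realLargestComp G)) := by
        gcongr
        · exact pow_le_one₀ (by positivity) hpV
        · exact hG.pow_le_totalInfluence hb hd hV hp'
    _ = _ := by rw [one_mul]

theorem CheegerGT.probC_not_isBalanced_le_totalInfluence (hG : CheegerGT G b) (hb : 0 ≤ b)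
    (hd : DegreeLE G d) (hV : 1 < Fintype.card V) (hp : p ∈ Set.Icc (0 : ℝ) 1)
    (hpV : 1 ≤ (1 - p) * Fintype.card V ^ 2) {t : ℝ}
    (ht : (2 * d + 5) * (√(Fintype.card V) * Real.log (Fintype.card V)) ≤ t) :
    Fintype.card V ^ 3 * probC p {x | ¬ IsBalanced G p t x} ≤
      2 * Real.exp d * totalInfluence p (realLargestComp G) := by
  have : Nonempty V := Fintype.card_pos_iff.1 (by lia)
  set n := (Fintype.card V : ℝ)
  have n_pos : 0 < n := Nat.cast_pos.2 Fintype.card_pos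
  have influence_ge : 1 ≤ n ^ (2 * d) * totalInfluence p (realLargestComp G) := by
    calc 1 ≤ ((1 - p) * n ^ 2) ^ d := one_le_pow₀ hpV
      _ = n ^ (2 * d) * (1 - p) ^ d := by rw [mul_pow, pow_mul, mul_comm]
      _ ≤ _ := by gcongr; exact hG.pow_le_totalInfluence hb hd hV hp
  have tail : Real.exp (d - t / √n) ≤ Real.exp d / n ^ (2 * d + 5) := by
    have : ((2 * d + 5 : ℕ) : ℝ) * Real.log n ≤ t / √n := by
      rw [le_div_iff₀ (Real.sqrt_pos.2 n_pos)]
      push_cast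
      linarith
    have power : n ^ (2 * d + 5) = Real.exp ((2 * d + 5 : ℕ) * Real.log n) := by
      rw [Real.exp_nat_mul, Real.exp_log n_pos]
    rw [Real.exp_sub, power]
    gcongr
  calc n ^ 3 * probC p {x | ¬ IsBalanced G p t x}
      ≤ n ^ 3 * (2 * n ^ 2 * (Real.exp d / n ^ (2 * d + 5))) := by
        gcongr
        exact (probC_not_isBalanced_le hd hp t).trans (by gcongr)
    _ = 2 * Real.exp d * (1 / n ^ (2 * d)) := by rw [pow_add]; field_simp
    _ ≤ 2 * Real.exp d * totalInfluence p (realLargestComp G) := by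
        gcongr
        rwa [div_le_iff₀' (by positivity)]

theorem CheegerGT.expC_card_bigDiffs_le_of_not_high (hG : CheegerGT G b) (hb : 0 ≤ b)
    (hd : DegreeLE G d) (hV : 1 < Fintype.card V) (hp : p ∈ Set.Icc (0 : ℝ) 1)
    (hpV : 1 ≤ (1 - p) * Fintype.card V ^ 2) {t c : ℝ}
    (ht : (2 * d + 5) * (√(Fintype.card V) * Real.log (Fintype.card V)) ≤ t) (hc : 0 ≤ c)
    (balanced : ∀ x, IsBalanced G p t x → ((bigDiffs (realLargestComp G) k x).card : ℝ) ≤ c) :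
    Fintype.card V ^ 2 * expC p (fun x => ((bigDiffs (realLargestComp G) k x).card : ℝ)) ≤
      Fintype.card V ^ 2 * (c * probC p {x | (bigDiffs (realLargestComp G) k x).Nonempty}) +
        2 * (d * Real.exp d) * totalInfluence p (realLargestComp G) := by
  have edges : (Fintype.card G.edgeSet : ℝ) ≤ d * Fintype.card V := by
    exact_mod_cast card_edgeSet_le hd
  have unbalanced := hG.probC_not_isBalanced_le_totalInfluence hb hd hV hp hpV ht
  have prob_nonneg := probC_nonneg hp {x | ¬ IsBalanced G p t x}
  have count := expC_card_bigDiffs_le (A := {x | IsBalanced G p t x}) hp hc balanced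
  rw [Set.compl_ofPred] at count
  calc _ ≤ (Fintype.card V : ℝ) ^ 2 *
        (c * probC p {x | (bigDiffs (realLargestComp G) k x).Nonempty} +
          d * Fintype.card V * probC p {x | ¬ IsBalanced G p t x}) := by
        gcongr
        exact count.trans (by gcongr)
    _ = (Fintype.card V : ℝ) ^ 2 *
        (c * probC p {x | (bigDiffs (realLargestComp G) k x).Nonempty}) +
          d * (Fintype.card V ^ 3 * probC p {x | ¬ IsBalanced G p t x}) := by ring
    _ ≤ _ := by
        grw [unbalanced]
        apply le_of_eq
        ring

end Regimes

section Main

variable {V : Type*} [Fintype V] {G : SimpleGraph V} [Fintype G.edgeSet] {b : ℝ} {d r : ℕ}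
  {k p t : ℝ}

theorem CheegerGT.probC_bigDiffs_nonempty_le_of_mid (hG : CheegerGT G b) (hb : 0 ≤ b)
    (hd : DegreeLE G d) (hk : 0 < k) (hkr : Fintype.card V / (1 + b / d) ^ r ≤ k)
    (hp : p ∈ Set.Ioo (0 : ℝ) 1) (hdp : 1 ≤ 4 * d * p) (ht : 0 ≤ t) :
    Fintype.card V ^ 2 * (Fintype.card V ^ 2 * (3 * t / p) / k ^ 2 *
        probC p {x | (bigDiffs (realLargestComp G) k x).Nonempty}) ≤
      96 * d * (r * ((1 + b / d) ^ 4 * (4 * d ^ 2) ^ 2) ^ r * t) *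
        totalInfluence p (realLargestComp G) := by
  have p_pos := hp.1
  have d_ge : (1 : ℝ) ≤ d := by
    rw [Nat.one_le_cast, Nat.one_le_iff_ne_zero]
    rintro rfl
    norm_num at hdp
  have inv_p : 1 / p ≤ 4 * d := (div_le_iff₀ p_pos).2 hdp
  have walks := hG.probC_bigDiffs_nonempty_mul_sq_le hb hd hk hkr (Set.Ioo_subset_Ioc_self hp)
    (D := 4 * d ^ 2) (by nlinarith) (by
      calc d / p = d * (1 / p) := by ring
        _ ≤ d * (4 * d) := by gcongr
        _ = 4 * d ^ 2 := by ring)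
  set prob := probC p {x | (bigDiffs (realLargestComp G) k x).Nonempty}
  set S := totalInfluence p (realLargestComp G)
  have prob_nonneg : 0 ≤ prob := probC_nonneg (Set.Ioo_subset_Icc_self hp) _
  rw [div_le_iff₀ (by positivity)] at hkr
  calc (Fintype.card V : ℝ) ^ 2 * (Fintype.card V ^ 2 * (3 * t / p) / k ^ 2 * prob)
      = Fintype.card V ^ 4 * (3 * t * (1 / p) / k ^ 2 * prob) := by ring
    _ ≤ (k * (1 + b / d) ^ r) ^ 4 * (3 * t * (4 * d) / k ^ 2 * prob) := by gcongr
    _ = 12 * d * t * ((1 + b / d) ^ r) ^ 4 * (prob * k ^ 2) := by field_simp; ring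
    _ ≤ 12 * d * t * ((1 + b / d) ^ r) ^ 4 * (8 * r * (4 * d ^ 2) ^ (r + r) * S) := by gcongr
    _ = _ := by
        generalize (1 + b / d) = τ, (4 * (d : ℝ) ^ 2) = D
        ring

theorem CheegerGT.expC_card_bigDiffs_le (hG : CheegerGT G b) (hb : 0 ≤ b) (hd : DegreeLE G d)
    (hV : 1 < Fintype.card V) (hk : 1 < k) (hkr : Fintype.card V / (1 + b / d) ^ r ≤ k)
    (hbk : 2 * d + 3 ≤ b * k)
    (ht : (2 * d + 5) * (√(Fintype.card V) * Real.log (Fintype.card V)) ≤ t) (htk : 4 * t ≤ k)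
    (hp : p ∈ Set.Ioo (0 : ℝ) 1) :
    Fintype.card V ^ 2 * expC p (fun x => ((bigDiffs (realLargestComp G) k x).card : ℝ)) ≤
      (2 * (d * Real.exp d) + 96 * d * (r * ((1 + b / d) ^ 4 * (4 * d ^ 2) ^ 2) ^ r * t)) *
        totalInfluence p (realLargestComp G) := by
  have hp' := Set.Ioo_subset_Icc_self hp
  have p_pos := hp.1
  have k_pos : 0 < k := one_pos.trans hk
  have t_nonneg : 0 ≤ t := le_trans (by positivity) ht
  have S_nonneg := totalInfluence_nonneg hp' (monotone_realLargestComp G)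
  have walks_nonneg : 0 ≤ 96 * d * (r * ((1 + b / d) ^ 4 * (4 * d ^ 2) ^ 2) ^ r * t) *
    totalInfluence p (realLargestComp G) := by positivity
  rw [add_mul]
  rcases le_or_gt ((1 - p) * Fintype.card V ^ 2) 1 with high | not_high
  · have := hG.expC_card_bigDiffs_le_of_high hb hd hV k_pos hbk (Set.Ioo_subset_Ico_self hp) high
    have : 0 ≤ d * Real.exp d * totalInfluence p (realLargestComp G) := by positivity
    linarith
  · rcases le_or_gt (4 * d * p) 1 with low | not_low
    · have := hG.expC_card_bigDiffs_le_of_not_high hb hd hV hp' not_high.le ht le_rfl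
        fun x hx => by rw [hx.bigDiffs_eq_empty hd p_pos.le low hk htk]; simp
      linarith
    · have := hG.expC_card_bigDiffs_le_of_not_high hb hd hV hp' not_high.le ht
        (c := Fintype.card V ^ 2 * (3 * t / p) / k ^ 2) (by positivity)
        fun x hx => (le_div_iff₀ (by positivity)).2 (hx.card_bigDiffs_mul_le p_pos k_pos)
      have := hG.probC_bigDiffs_nonempty_le_of_mid hb hd k_pos hkr hp not_low.le t_nonneg
      linarith

theorem varC_realLargestComp_le_card_mul (hp : p ∈ Set.Icc (0 : ℝ) 1) :
    varC p (realLargestComp G) ≤ Fintype.card V * totalInfluence p (realLargestComp G) :=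
  varC_le_mul_totalInfluence hp (monotone_realLargestComp G) partialDiff_realLargestComp_le

theorem CheegerGT.varC_realLargestComp_le (hG : CheegerGT G b) (hb : 0 ≤ b) (hd : DegreeLE G d)
    (hV : 1 < Fintype.card V) (hk : 1 < k) (hkr : Fintype.card V / (1 + b / d) ^ r ≤ k)
    (hbk : 2 * d + 3 ≤ b * k)
    (ht : (2 * d + 5) * (√(Fintype.card V) * Real.log (Fintype.card V)) ≤ t) (htk : 4 * t ≤ k)
    (hp : p ∈ Set.Ioo (0 : ℝ) 1) :
    varC p (realLargestComp G) ≤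
      (k + 2 * (d * Real.exp d) + 96 * d * (r * ((1 + b / d) ^ 4 * (4 * d ^ 2) ^ 2) ^ r * t)) *
        totalInfluence p (realLargestComp G) := by
  have split := varC_le_add_card_bigDiffs (Set.Ioo_subset_Icc_self hp) (monotone_realLargestComp G)
    partialDiff_realLargestComp_le (zero_le_one.trans hk.le)
  have large := hG.expC_card_bigDiffs_le hb hd hV hk hkr hbk ht htk hp
  linarith

end Main

section Scale

theorem exists_pow_le_sqrt_sqrt {τ A : ℝ} (hτ : 1 < τ) (hA : 0 ≤ A) :
    ∃ c, ∀ n : ℕ, n ≠ 0 →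
      ∃ r : ℕ, τ ^ r ≤ √√n ∧ r * A ^ r ≤ √√n ∧ Real.log n ≤ c * τ ^ r := by
  obtain ⟨Q, hQ⟩ := exists_nat_ge (max τ (2 * A))
  obtain ⟨τ_le, A_le⟩ := max_le_iff.1 hQ
  have Q_gt : 1 < Q := Nat.one_lt_cast.1 (hτ.trans_le τ_le)
  have gap : 0 < min 1 (τ - 1) := lt_min one_pos (sub_pos.2 hτ)
  refine ⟨4 * Real.log Q / min 1 (τ - 1), fun n hn => ⟨Nat.log (Q ^ 4) n, ?_⟩⟩
  set r := Nat.log (Q ^ 4) n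
  have Q_pow : (Q : ℝ) ^ r ≤ √√n := by
    refine Real.le_sqrt_of_sq_le (Real.le_sqrt_of_sq_le ?_)
    have lower : (Q ^ 4) ^ r ≤ n := Nat.pow_log_le_self _ hn
    calc (((Q : ℝ) ^ r) ^ 2) ^ 2 = ((Q : ℝ) ^ 4) ^ r := by ring
      _ ≤ (n : ℝ) := by exact_mod_cast lower
  refine ⟨le_trans (by gcongr) Q_pow, le_trans ?_ Q_pow, ?_⟩
  · calc r * A ^ r ≤ 2 ^ r * A ^ r := by
          gcongr
          exact_mod_cast Nat.lt_two_pow_self.le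
      _ = (2 * A) ^ r := (mul_pow _ _ _).symm
      _ ≤ (Q : ℝ) ^ r := by gcongr
  · have upper : n ≤ (Q ^ 4) ^ (r + 1) :=
      (Nat.lt_pow_succ_log_self (Nat.one_lt_pow four_ne_zero Q_gt) n).le
    have bernoulli : (r + 1) * min 1 (τ - 1) ≤ τ ^ r := by
      have := one_add_mul_sub_le_pow (show -1 ≤ τ by linarith) r
      nlinarith [min_le_left 1 (τ - 1), min_le_right 1 (τ - 1)]
    rw [div_mul_eq_mul_div, le_div_iff₀ gap]
    calc Real.log n * min 1 (τ - 1)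
        ≤ Real.log (((Q : ℝ) ^ 4) ^ (r + 1)) * min 1 (τ - 1) := by
          gcongr
          exact_mod_cast upper
      _ = 4 * Real.log Q * ((r + 1) * min 1 (τ - 1)) := by
          rw [Real.log_pow, Real.log_pow]
          push_cast
          ring
      _ ≤ 4 * Real.log Q * τ ^ r := by gcongr

theorem eventually_log_sq_le_sqrt_sqrt : ∀ᶠ n : ℕ in atTop, Real.log n ^ 2 ≤ √√n := by
  have little := (Real.isLittleO_pow_log_id_atTop (n := 8)).bound one_pos
  filter_upwards [tendsto_natCast_atTop_atTop.eventually little] with n hn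
  refine Real.le_sqrt_of_sq_le (Real.le_sqrt_of_sq_le ?_)
  calc ((Real.log n ^ 2) ^ 2) ^ 2 = Real.log n ^ 8 := by ring
    _ ≤ ‖Real.log n ^ 8‖ := Real.le_norm_self _
    _ ≤ n := by simpa using hn

theorem mul_sqrt_mul_sq_le {w ℓ x : ℝ} (hx : 0 ≤ x) (hw : w ≤ √√x) (hℓ : ℓ ^ 2 ≤ √√x) :
    w * (√x * ℓ ^ 2) ≤ x := by
  calc w * (√x * ℓ ^ 2) ≤ √√x * (√x * √√x) := by gcongr
    _ = x := by rw [mul_left_comm, Real.mul_self_sqrt (Real.sqrt_nonneg x), Real.mul_self_sqrt hx]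

theorem exists_eventually_exists_scale {τ A M : ℝ} (hτ : 1 < τ) (hA : 0 ≤ A) (hM : 1 ≤ M) :
    ∃ C, ∀ᶠ n : ℕ in atTop, ∃ r : ℕ,
      M ≤ n / τ ^ r ∧ M * (√n * Real.log n) ≤ n / τ ^ r ∧
      n / τ ^ r + M + M * (r * A ^ r * (√n * Real.log n)) ≤ C * (n / Real.log n) := by
  obtain ⟨c, scale⟩ := exists_pow_le_sqrt_sqrt hτ hA
  refine ⟨c + M + M, ?_⟩
  filter_upwards [eventually_log_sq_le_sqrt_sqrt, eventually_ge_atTop 1,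
    (Real.tendsto_log_atTop.comp tendsto_natCast_atTop_atTop).eventually_ge_atTop M]
    with n log_sq_le n_ge M_le_log
  obtain ⟨r, τ_pow, A_pow, log_le⟩ := scale n (Nat.one_le_iff_ne_zero.1 n_ge)
  refine ⟨r, ?_⟩
  simp only [Function.comp_apply] at M_le_log
  have sqrt_ge : 1 ≤ √(n : ℝ) := Real.one_le_sqrt.2 (Nat.one_le_cast.2 n_ge)
  have τ_budget := mul_sqrt_mul_sq_le (Nat.cast_nonneg n) τ_pow log_sq_le
  have A_budget := mul_sqrt_mul_sq_le (Nat.cast_nonneg n) A_pow log_sq_le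
  have log_le_self : Real.log n ≤ n := Real.log_le_self (Nat.cast_nonneg n)
  set ℓ := Real.log n
  have ℓ_pos : 0 < ℓ := by linarith
  have M_mul_le : M * ℓ ≤ ℓ ^ 2 := by rw [sq]; gcongr
  have first : n / τ ^ r ≤ c * (n / ℓ) := by
    rw [mul_div_assoc', div_le_div_iff₀ (by positivity) ℓ_pos]
    linear_combination (n : ℝ) * log_le
  have second : 1 ≤ n / ℓ := (one_le_div ℓ_pos).2 log_le_self
  have third : r * A ^ r * (√n * ℓ) ≤ n / ℓ := by
    rw [le_div_iff₀ ℓ_pos]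
    linarith
  rw [le_div_iff₀ (by positivity), le_div_iff₀ (by positivity)]
  refine ⟨?_, ?_, ?_⟩
  · calc M * τ ^ r = τ ^ r * (1 * (M * 1)) := by ring
      _ ≤ τ ^ r * (√n * (M * ℓ)) := by gcongr; exact hM.trans M_le_log
      _ ≤ τ ^ r * (√n * ℓ ^ 2) := by gcongr
      _ ≤ n := τ_budget
  · calc M * (√n * ℓ) * τ ^ r = τ ^ r * (√n * (M * ℓ)) := by ring
      _ ≤ τ ^ r * (√n * ℓ ^ 2) := by gcongr
      _ ≤ n := τ_budget
  · linear_combination first + M * second + M * third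

end Scale

section VarianceBound

universe u

theorem CheegerGT.exists_varC_realLargestComp_le {b : ℝ} (hb : 0 < b) {d : ℕ} (hd : 0 < d) :
    ∃ C : ℝ, ∃ N : ℕ, ∀ {V : Type u} [Fintype V] (G : SimpleGraph V) [Fintype G.edgeSet],
      N ≤ Fintype.card V → DegreeLE G d → CheegerGT G b → ∀ p ∈ Set.Ioo (0 : ℝ) 1,
        varC p (realLargestComp G) ≤ C * (Fintype.card V / Real.log (Fintype.card V)) *
          totalInfluence p (realLargestComp G) := by
  obtain ⟨M, M_gt, M_ge_b, M_ge_t, M_ge_exp, M_ge_walks⟩ :=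
    ((eventually_gt_atTop (1 : ℝ)).and <| (eventually_ge_atTop ((2 * d + 3) / b)).and <|
      (eventually_ge_atTop (4 * (2 * d + 5 : ℝ))).and <|
      (eventually_ge_atTop (2 * (d * Real.exp d))).and <|
      eventually_ge_atTop (96 * d * (2 * d + 5 : ℝ))).exists
  have τ_gt : 1 < 1 + b / d := lt_add_of_pos_right _ (by positivity)
  obtain ⟨C, scale⟩ := exists_eventually_exists_scale τ_gt
    (A := (1 + b / d) ^ 4 * (4 * d ^ 2) ^ 2) (by positivity) M_gt.le
  obtain ⟨N, scale⟩ := eventually_atTop.1 (scale.and (eventually_gt_atTop 1))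
  refine ⟨C, N, fun {V} _ G _ hN hd hG p hp => ?_⟩
  obtain ⟨⟨r, M_le, t_le, total⟩, hV⟩ := scale _ hN
  have S_nonneg := totalInfluence_nonneg (Set.Ioo_subset_Icc_self hp) (monotone_realLargestComp G)
  refine (hG.varC_realLargestComp_le hb.le hd hV (M_gt.trans_le M_le) le_rfl
    ((div_le_iff₀' hb).1 (M_ge_b.trans M_le)) le_rfl (le_trans ?_ t_le) hp).trans ?_
  · rw [← mul_assoc]
    gcongr
  · have walks_nonneg : 0 ≤ r * ((1 + b / d) ^ 4 * (4 * d ^ 2) ^ 2) ^ r *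
        (√(Fintype.card V) * Real.log (Fintype.card V)) := by positivity
    refine mul_le_mul_of_nonneg_right (le_trans ?_ total) S_nonneg
    linear_combination M_ge_exp + mul_le_mul_of_nonneg_right M_ge_walks walks_nonneg

theorem varC_realLargestComp_le_of_card_le {V : Type*} [Fintype V] {G : SimpleGraph V}
    [Fintype G.edgeSet] {N : ℕ} (hN : Fintype.card V ≤ N) {p : ℝ} (hp : p ∈ Set.Icc (0 : ℝ) 1) :
    varC p (realLargestComp G) ≤ Real.log N * (Fintype.card V / Real.log (Fintype.card V)) *
      totalInfluence p (realLargestComp G) := by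
  have trivial_bound := varC_realLargestComp_le_card_mul (G := G) hp
  rcases le_or_gt (Fintype.card V) 1 with small | large
  · have : Subsingleton V := Fintype.card_le_one_iff_subsingleton.1 small
    have : IsEmpty G.edgeSet := by
      rw [Subsingleton.elim G ⊥, SimpleGraph.edgeSet_bot]
      infer_instance
    simpa [totalInfluence] using trivial_bound
  · have log_pos : 0 < Real.log (Fintype.card V) := Real.log_pos (Nat.one_lt_cast.2 large)
    have S_nonneg := totalInfluence_nonneg hp (monotone_realLargestComp G)
    refine trivial_bound.trans (mul_le_mul_of_nonneg_right ?_ S_nonneg)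
    calc (Fintype.card V : ℝ)
        = Real.log (Fintype.card V) * (Fintype.card V / Real.log (Fintype.card V)) :=
          (mul_div_cancel₀ _ log_pos.ne').symm
      _ ≤ _ := by gcongr

theorem stmt10_general (b : ℝ) (hb : 0 < b) (d : ℕ) :
    ∃ C : ℝ, ∀ {V : Type u} [Finite V] (G : SimpleGraph V), DegreeLE G d → CheegerGT G b →
      ∀ p ∈ Set.Ioo (0 : ℝ) 1,
        varC p (fun x => (largestComp G x : ℝ)) ≤
          C * ((Nat.card V : ℝ) / Real.log (Nat.card V)) *
            deriv (fun q => expC q (fun x => (largestComp G x : ℝ))) p := by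
  obtain ⟨C, N, large⟩ := CheegerGT.exists_varC_realLargestComp_le.{u} hb d.succ_pos
  refine ⟨max C (Real.log N), fun {V} _ G hd hG p hp => ?_⟩
  have := Fintype.ofFinite V
  have := Fintype.ofFinite G.edgeSet
  have hd' : DegreeLE G (d + 1) := fun v => (hd v).trans d.le_succ
  change varC p (realLargestComp G) ≤ _ * deriv (fun q => expC q (realLargestComp G)) p
  rw [deriv_expC, Nat.card_eq_fintype_card]
  have S_nonneg := totalInfluence_nonneg (Set.Ioo_subset_Icc_self hp) (monotone_realLargestComp G)
  rcases le_total N (Fintype.card V) with hN | hN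
  · exact (large G hN hd' hG p hp).trans (by gcongr; exact le_max_left _ _)
  · exact (varC_realLargestComp_le_of_card_le hN (Set.Ioo_subset_Icc_self hp)).trans
      (by gcongr; exact le_max_right _ _)

end VarianceBound

/-- there is `C(b,d) < ∞` such that in any `(b,d)`-expander, for every `n` and
every `p ∈ (0,1)`,
`Var_p(L_n⁽¹⁾) ≤ C (|V_n| / log |V_n|) · (d/dp) E_p(L_n⁽¹⁾)`. -/
theorem stmt10 (b : ℝ) (hb : 0 < b) (d : ℕ) :
    ∃ C : ℝ, ∀ (E : ExpanderSeq b d) (n : ℕ), ∀ p ∈ Set.Ioo (0 : ℝ) 1,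
      varC p (fun x => (largestComp (E.G n) x : ℝ)) ≤
        C * ((Nat.card (E.V n) : ℝ) / Real.log (Nat.card (E.V n))) *
          deriv (fun q => expC q (fun x => (largestComp (E.G n) x : ℝ))) p := by
  obtain ⟨C, bound⟩ := stmt10_general b hb d
  exact ⟨C, fun E n => have := E.finV n; bound (E.G n) (E.degree_le n) (E.cheeger_gt n)⟩
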